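/- arXiv:math/0703532 — 2 statements merged into one kernel-verified Lean document; each statement's English description precedes it below -/
import Mathlib

section
/- Fix g ≥ 1 and let S be a finite subset of Sp(2g, ℤ) whose elements generate Sp(2g, ℤ) as a group. For each N, among the |S|^N words w : Fin N → S, let G(N) be the number of words whose product M_w satisfies all of: (1) q is irreducible, where q ∈ ℚ[X] is the characteristic polynomial of the underlying 2g × 2g integer matrix of M_w mapped to ℚ[X]; (2) q is not a cyclotomic polynomial, i.e. q ≠ Polynomial.cyclotomic m ℚ for every m; (3) q is not of the form h(X^k) for any k > 1, i.e. there is no k > 1 and h ∈ ℚ[X] with q = h.comp (X^k). Then G(N) / |S|^N tends to 1 as N tends to infinity. -/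
/-!
Modulo a prime `p`, the random walk on `Sp(2g, ℤ)` becomes equidistributed in `Sp(2g, 𝔽_p)`, and
even jointly so for finitely many primes: products of perfect groups are perfect, and a finite
perfect group has no homomorphism onto a nontrivial cyclic group that could make the walk periodic,
so that for some length every element is the product of a word of that length. Averaging over the
words of this length contracts the functions of mean zero.

An element satisfies the Casson–Bleiler conditions as soon as, modulo a single prime, its
characteristic polynomial is irreducible and its trace is not the residue of an integer in
`[-2g, 2g]`: a cyclotomic polynomial of degree `2g` has second coefficient at most `2g` in absolute
value, and a polynomial in `X ^ k` has second coefficient zero.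

For large `p` a proportion of at least `1 / (4g)` of `Sp(2g, 𝔽_p)` has these properties. Indeed, the
elements of `𝔽_{p^{2g}}` of norm one over `𝔽_{p^g}` act by isometries of a symplectic form, and at
least half of these `p ^ g + 1` elements generate the field and have an allowed trace. The
centralizer of such an element in `Sp(2g, 𝔽_p)` is no larger than the norm-one group itself, and at
most `2g` of them, being roots of one characteristic polynomial, lie in one conjugacy class.

Using `k` primes, the limiting proportion of bad words is at most `(1 - 1 / (4g)) ^ k`.
-/

open scoped BigOperators
open Filter Topology Matrix Polynomial

/-! ### Random words in a finite perfect group -/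

section Words

variable {ι M N : Type*} [Monoid M] [Monoid N]

/-- The product `f (w 0) * f (w 1) * ⋯ * f (w (n - 1))` of the letters of a word `w` of length `n`,
where the letter `i` stands for `f i`. -/
def wordProd (f : ι → M) {n : ℕ} (w : Fin n → ι) : M :=
  (List.ofFn fun i => f (w i)).prod

theorem wordProd_append (f : ι → M) {m n : ℕ} (v : Fin m → ι) (w : Fin n → ι) :
    wordProd f (Fin.append v w) = wordProd f v * wordProd f w := by
  have key : (fun i => f (Fin.append v w i)) = Fin.append (fun i => f (v i)) fun i => f (w i) := by
    funext i
    refine Fin.addCases (fun j => ?_) (fun j => ?_) i <;> simp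
  rw [wordProd, key, List.ofFn_fin_append, List.prod_append, wordProd, wordProd]

theorem wordProd_get (f : ι → M) (l : List ι) : wordProd f l.get = (l.map f).prod := by
  rw [wordProd, ← Function.comp_def f, ← List.map_ofFn, List.ofFn_get]

theorem map_wordProd (φ : M →* N) (f : ι → M) {n : ℕ} (w : Fin n → ι) :
    φ (wordProd f w) = wordProd (fun i => φ (f i)) w := by
  simp only [wordProd, map_list_prod, List.map_ofFn, Function.comp_def]

variable {G : Type*} [Group G]

-- The word length modulo `k` extends to a homomorphism to an abelian group, hence vanishes on
-- commutators.
theorem exists_dvd_length_and_prod_eq [Finite G] [Group.IsPerfect G] {f : ι → G}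
    (hf : Subgroup.closure (Set.range f) = ⊤) (k : ℕ) [NeZero k] (x : G) :
    ∃ l : List ι, k ∣ l.length ∧ (l.map f).prod = x := by
  let A := Multiplicative (ZMod k)
  have : Finite A := inferInstanceAs (Finite (ZMod k))
  let f' : ι → G × A := fun i => (f i, Multiplicative.ofAdd 1)
  let K := Subgroup.closure (Set.range f')
  have hfst : K.map (MonoidHom.fst G A) = ⊤ := by
    rw [MonoidHom.map_closure, ← Set.range_comp]
    exact hf
  obtain ⟨y, hyK, rfl⟩ : x ∈ ⁅K, K⁆.map (MonoidHom.fst G A) := by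
    rw [Subgroup.map_commutator, hfst, ← commutator_def]
    exact Group.IsPerfect.mem_commutator
  have hsnd : y.2 = 1 := by
    have : MonoidHom.snd G A y ∈ ⁅K.map (MonoidHom.snd G A), K.map (MonoidHom.snd G A)⁆ := by
      rw [← Subgroup.map_commutator]
      exact Subgroup.mem_map_of_mem _ hyK
    rwa [Subgroup.commutator_eq_bot_iff_le_centralizer.mpr
      (fun a _ b _ => mul_comm b a), Subgroup.mem_bot] at this
  obtain ⟨l, rfl⟩ : y ∈ MonoidHom.mrange (FreeMonoid.lift f') := by
    rw [FreeMonoid.mrange_lift, ← Subgroup.closure_toSubmonoid_of_finite]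
    exact K.commutator_le_self hyK
  refine ⟨l.toList, ?_, ?_⟩
  · have : (MonoidHom.snd G A) (FreeMonoid.lift f' l) =
        Multiplicative.ofAdd (l.toList.length : ZMod k) := by
      rw [FreeMonoid.lift_apply, map_list_prod, List.map_map]
      simp only [f', Function.comp_def, MonoidHom.coe_snd, List.map_const', List.prod_replicate]
      rw [← ofAdd_nsmul, nsmul_one]
    rw [← ZMod.natCast_eq_zero_iff]
    exact Multiplicative.ofAdd.injective (this.symm.trans hsnd)
  · rw [FreeMonoid.lift_apply]
    change _ = MonoidHom.fst G A _
    rw [map_list_prod, List.map_map]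
    rfl

theorem exists_forall_exists_wordProd_eq [Nonempty ι] [Finite G] [Group.IsPerfect G] {f : ι → G}
    (hf : Subgroup.closure (Set.range f) = ⊤) :
    ∃ n, 0 < n ∧ ∀ x : G, ∃ w : Fin n → ι, wordProd f w = x := by
  have : NeZero (Nat.card G) := ⟨Nat.card_pos.ne'⟩
  choose l hdvd hprod using exists_dvd_length_and_prod_eq hf (Nat.card G)
  choose r hr using hdvd
  obtain ⟨B, hB⟩ := (Set.finite_range r).bddAbove
  obtain ⟨i⟩ := ‹Nonempty ι›
  refine ⟨Nat.card G * (B + 1), Nat.mul_pos Nat.card_pos B.succ_pos, fun x => ?_⟩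
  let l' := l x ++ List.replicate (Nat.card G * (B + 1 - r x)) i
  have hlen : l'.length = Nat.card G * (B + 1) := by
    have : r x ≤ B := hB ⟨x, rfl⟩
    rw [List.length_append, List.length_replicate, hr, ← Nat.mul_add,
      Nat.add_sub_cancel' (by omega)]
  have hl' : wordProd f l'.get = x := by
    simp [wordProd_get, l', hprod, pow_mul]
  exact hlen ▸ ⟨_, hl'⟩

end Words

section WordAverage

variable {ι M : Type*} [Fintype ι] [Monoid M]

/-- The average of `F (x * y)`, where `y` runs over the products of all words of length `n`: the
expected value of `F` after `n` steps of the random walk on `M` that starts at `x` and whose steps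
are right multiplications by the `f i`. -/
noncomputable def wordAverage (f : ι → M) (n : ℕ) (F : M → ℝ) (x : M) : ℝ :=
  𝔼 w : Fin n → ι, F (x * wordProd f w)

theorem wordAverage_zero (f : ι → M) (F : M → ℝ) : wordAverage f 0 F = F := by
  funext x
  simp [wordAverage, wordProd]

theorem wordAverage_add (f : ι → M) (m n : ℕ) (F : M → ℝ) :
    wordAverage f (m + n) F = wordAverage f m (wordAverage f n F) := by
  funext x
  simp only [wordAverage]
  rw [← Finset.expect_product', Finset.univ_product_univ]
  refine (Fintype.expect_equiv (Fin.appendEquiv m n) _ _ fun p => ?_).symm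
  change _ = F (x * wordProd f (Fin.append p.1 p.2))
  rw [wordProd_append, mul_assoc]

theorem wordAverage_mono (f : ι → M) (n : ℕ) : Monotone (wordAverage f n) :=
  fun _ _ h _ => Finset.expect_le_expect fun _ _ => h _

theorem wordAverage_comp {N : Type*} [Monoid N] (φ : M →* N) (f : ι → M) (n : ℕ) (F : N → ℝ)
    (x : M) : wordAverage f n (F ∘ φ) x = wordAverage (fun i => φ (f i)) n F (φ x) := by
  simp only [wordAverage, Function.comp_apply, map_mul, map_wordProd]

theorem wordAverage_sub_const [Nonempty ι] (f : ι → M) (n : ℕ) (F : M → ℝ) (c : ℝ) (x : M) :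
    wordAverage f n (fun y => F y - c) x = wordAverage f n F x - c := by
  rw [wordAverage, Finset.expect_sub_distrib, Fintype.expect_const, wordAverage]

theorem wordAverage_indicator_one (f : ι → M) (n : ℕ) (P : M → Prop)
    [DecidablePred fun w : Fin n → ι => P (wordProd f w)] :
    wordAverage f n ({x | P x}.indicator 1) 1 =
      (Finset.univ.filter fun w : Fin n → ι => P (wordProd f w)).card /
        (Fintype.card ι : ℝ) ^ n := by
  simp [wordAverage, Fintype.expect_eq_sum_div_card, Set.indicator_apply]

variable {G : Type*} [Group G] [Fintype G]

theorem norm_wordAverage_le (f : ι → G) (n : ℕ) (F : G → ℝ) : ‖wordAverage f n F‖ ≤ ‖F‖ := by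
  refine (pi_norm_le_iff_of_nonneg (norm_nonneg F)).mpr fun x => ?_
  obtain h | h := isEmpty_or_nonempty (Fin n → ι)
  · simp [wordAverage]
  · rw [Real.norm_eq_abs]
    exact (Finset.abs_expect_le _ _).trans
      (Finset.expect_le Finset.univ_nonempty fun w _ => norm_le_pi_norm F _)

theorem sum_wordAverage (f : ι → G) (n : ℕ) {F : G → ℝ} (hF : ∑ x, F x = 0) :
    ∑ x, wordAverage f n F x = 0 := by
  simp only [wordAverage, ← Finset.expect_sum_comm]
  refine Finset.expect_eq_zero fun w _ => ?_
  rw [← hF]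
  exact Equiv.sum_comp (Equiv.mulRight (wordProd f w)) F

-- Choose for each `y : G` one word with product `y`. On these words the average vanishes.
theorem norm_wordAverage_le_mul_norm {f : ι → G} {n : ℕ}
    (hn : ∀ x : G, ∃ w : Fin n → ι, wordProd f w = x) {F : G → ℝ} (hF : ∑ x, F x = 0) :
    ‖wordAverage f n F‖ ≤
      (1 - Fintype.card G / Fintype.card (Fin n → ι)) * ‖F‖ := by
  classical
  choose s hs using hn
  have hinj : Function.Injective s := fun x y h => by rw [← hs x, h, hs]
  have hle : Fintype.card G ≤ Fintype.card (Fin n → ι) := Fintype.card_le_of_injective s hinj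
  have hpos : (0 : ℝ) < Fintype.card (Fin n → ι) :=
    Nat.cast_pos.mpr (Fintype.card_pos.trans_le hle)
  set W := Finset.univ.map ⟨s, hinj⟩
  have hW : (Wᶜ.card : ℝ) = Fintype.card (Fin n → ι) - Fintype.card G := by
    rw [Finset.card_compl, Finset.card_map, Finset.card_univ, Nat.cast_sub hle]
  have hr : 1 - (Fintype.card G : ℝ) / Fintype.card (Fin n → ι) =
      Wᶜ.card / Fintype.card (Fin n → ι) := by
    rw [hW, sub_div, div_self hpos.ne']
  rw [hr]
  refine (pi_norm_le_iff_of_nonneg (by positivity)).mpr fun x => ?_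
  have hsum : ∑ w ∈ W, F (x * wordProd f w) = 0 := by
    rw [← hF, Finset.sum_map]
    simp only [Function.Embedding.coeFn_mk, hs]
    exact Equiv.sum_comp (Equiv.mulLeft x) F
  rw [wordAverage, Fintype.expect_eq_sum_div_card, ← Finset.sum_add_sum_compl W, hsum, zero_add,
    norm_div, Real.norm_natCast, div_mul_eq_mul_div]
  gcongr
  calc ‖∑ w ∈ Wᶜ, F (x * wordProd f w)‖ ≤ ∑ _w ∈ Wᶜ, ‖F‖ :=
        norm_sum_le_of_le _ fun w _ => norm_le_pi_norm F _
    _ = Wᶜ.card * ‖F‖ := by rw [Finset.sum_const, nsmul_eq_mul]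

variable [Nonempty ι] [Group.IsPerfect G] {f : ι → G}

theorem tendsto_norm_wordAverage (hf : Subgroup.closure (Set.range f) = ⊤) {F : G → ℝ}
    (hF : ∑ x, F x = 0) : Tendsto (fun n => ‖wordAverage f n F‖) atTop (𝓝 0) := by
  obtain ⟨m, hm, hcover⟩ := exists_forall_exists_wordProd_eq hf
  set r : ℝ := 1 - Fintype.card G / Fintype.card (Fin m → ι) with hr
  have hle : Fintype.card G ≤ Fintype.card (Fin m → ι) :=
    Fintype.card_le_of_surjective (wordProd f) hcover
  have hr0 : 0 ≤ r := sub_nonneg.mpr (div_le_one_of_le₀ (by exact_mod_cast hle) (by positivity))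
  have hr1 : r < 1 := by
    rw [hr, sub_lt_self_iff]
    exact div_pos (Nat.cast_pos.mpr Fintype.card_pos) (Nat.cast_pos.mpr Fintype.card_pos)
  have hanti : Antitone fun n => ‖wordAverage f n F‖ := antitone_nat_of_succ_le fun n => by
    rw [add_comm, wordAverage_add]
    exact norm_wordAverage_le f 1 _
  have hpow : ∀ k, ‖wordAverage f (m * k) F‖ ≤ r ^ k * ‖F‖ := fun k => by
    induction k with
    | zero => rw [mul_zero, wordAverage_zero, pow_zero, one_mul]
    | succ k ih =>
      rw [mul_add_one, add_comm, wordAverage_add, pow_succ', mul_assoc]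
      exact (norm_wordAverage_le_mul_norm hcover (sum_wordAverage f _ hF)).trans (by gcongr)
  rw [tendsto_iff_tendsto_subseq_of_antitone hanti (tendsto_id.const_mul_atTop' hm)]
  refine squeeze_zero (fun _ => norm_nonneg _) hpow ?_
  simpa using (tendsto_pow_atTop_nhds_zero_of_lt_one hr0 hr1).mul_const ‖F‖

theorem tendsto_wordAverage_expect (hf : Subgroup.closure (Set.range f) = ⊤) (F : G → ℝ) (x : G) :
    Tendsto (fun n => wordAverage f n F x) atTop (𝓝 (𝔼 y, F y)) := by
  have hsum : ∑ y, (F y - 𝔼 z, F z) = 0 := by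
    simp [Finset.sum_sub_distrib]
  rw [tendsto_iff_norm_sub_tendsto_zero]
  refine squeeze_zero (fun _ => norm_nonneg _) (fun n => ?_) (tendsto_norm_wordAverage hf hsum)
  rw [← wordAverage_sub_const]
  exact norm_le_pi_norm _ x

end WordAverage

/-! ### The sieve over independent finite quotients -/

section Sieve

theorem isPerfect_pi {κ : Type*} [Finite κ] (G : κ → Type*) [∀ i, Group (G i)]
    [∀ i, Group.IsPerfect (G i)] : Group.IsPerfect (∀ i, G i) := by
  rw [Group.isPerfect_def, commutator_def, ← Subgroup.pi_top Set.univ,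
    Subgroup.commutator_pi_pi_of_finite]
  simp only [← commutator_def, Group.IsPerfect.commutator_eq_top]

theorem one_sub_pow_le_expect_indicator_exists_mem {κ : Type*} [Fintype κ] [DecidableEq κ]
    {G : κ → Type*} [∀ i, Fintype (G i)] [∀ i, Nonempty (G i)] (A : ∀ i, Finset (G i)) {δ : ℝ}
    (hA : ∀ i, δ * Fintype.card (G i) ≤ (A i).card) :
    1 - (1 - δ) ^ Fintype.card κ ≤
      𝔼 x, {x : ∀ i, G i | ∃ i, x i ∈ A i}.indicator (1 : (∀ i, G i) → ℝ) x := by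
  classical
  have hcompl : ∀ x, {x : ∀ i, G i | ∃ i, x i ∈ A i}.indicator (1 : (∀ i, G i) → ℝ) x =
      1 - (if x ∈ Fintype.piFinset fun i => (A i)ᶜ then 1 else 0) := fun x => by
    simp only [Set.indicator_apply, Set.mem_ofPred_eq, Fintype.mem_piFinset, Finset.mem_compl,
      Pi.one_apply, ← not_exists]
    split_ifs <;> simp
  have hfactor : ∀ i, (((A i)ᶜ.card : ℝ) / Fintype.card (G i)) ≤ 1 - δ := fun i => by
    rw [Finset.card_compl, Nat.cast_sub (A i).card_le_univ,
      div_le_iff₀ (by simp [Fintype.card_pos])]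
    linarith [hA i]
  simp only [hcompl]
  rw [Finset.expect_sub_distrib, Fintype.expect_const, Fintype.expect_eq_sum_div_card]
  rw [Finset.sum_boole, Finset.filter_mem_eq_inter, Finset.univ_inter, Fintype.card_piFinset,
    Fintype.card_pi, Nat.cast_prod, Nat.cast_prod, ← Finset.prod_div_distrib]
  gcongr
  exact (Finset.prod_le_prod (fun i _ => by positivity) fun i _ => hfactor i).trans_eq (by simp)

variable {ι Γ κ : Type*} [Fintype ι] [Nonempty ι] [Group Γ] [Infinite κ] {G : κ → Type*}
  [∀ i, Group (G i)] [∀ i, Fintype (G i)] [∀ i, Group.IsPerfect (G i)]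

theorem tendsto_wordAverage_indicator_one {f : ι → Γ} (hf : Subgroup.closure (Set.range f) = ⊤)
    {φ : ∀ i, Γ →* G i}
    (hφ : ∀ s : Finset κ, Function.Surjective (MonoidHom.pi fun i : s => φ i))
    {A : ∀ i, Finset (G i)} {δ : ℝ} (hδ : 0 < δ)
    (hA : ∀ i, δ * Fintype.card (G i) ≤ (A i).card)
    {P : Γ → Prop} (hP : ∀ i x, φ i x ∈ A i → P x) :
    Tendsto (fun n => wordAverage f n ({x | P x}.indicator 1) 1) atTop (𝓝 1) := by
  have hle : ∀ n, wordAverage f n ({x | P x}.indicator 1) 1 ≤ 1 := fun n =>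
    Finset.expect_le Finset.univ_nonempty
      fun w _ => Set.indicator_le_self' (fun _ _ => zero_le_one) _
  classical
  refine tendsto_order.mpr ⟨fun a ha => ?_, fun a ha => .of_forall fun n => (hle n).trans_lt ha⟩
  obtain ⟨k, hk⟩ : ∃ k : ℕ, (1 - δ) ^ k < 1 - a :=
    exists_pow_lt_of_lt_one (sub_pos.mpr ha) (sub_lt_self 1 hδ)
  obtain ⟨s, hs⟩ := Infinite.exists_subset_card_eq κ k
  let Φ : Γ →* ∀ i : s, G i := MonoidHom.pi fun i : s => φ i
  let F : (∀ i : s, G i) → ℝ := {x : ∀ i : s, G i | ∃ i : s, x i ∈ A i}.indicator 1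
  have hgen : Subgroup.closure (Set.range fun j => Φ (f j)) = ⊤ := by
    rw [← Subgroup.map_top_of_surjective Φ (hφ s), ← hf, MonoidHom.map_closure, ← Set.range_comp]
    rfl
  have hF : a < 𝔼 x, F x := by
    have := one_sub_pow_le_expect_indicator_exists_mem (fun i : s => A i) fun i => hA i
    rw [Fintype.card_coe, hs] at this
    linarith
  have hFP : F ∘ Φ ≤ {x | P x}.indicator 1 :=
    Set.indicator_le_indicator_of_subset (s := {x | ∃ i : s, φ i x ∈ A i})
      (fun x ⟨i, hi⟩ => hP i x hi) fun _ => zero_le_one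
  have : Group.IsPerfect (∀ i : s, G i) := isPerfect_pi _
  filter_upwards [(tendsto_wordAverage_expect hgen F 1).eventually_const_lt hF] with n hn
  refine hn.trans_le ?_
  rw [← map_one Φ, ← wordAverage_comp]
  exact wordAverage_mono f n hFP 1

end Sieve

/-! ### Generation and perfectness of the symplectic group -/

section SymplecticGeneration

variable {l R F : Type*} [Fintype l] [DecidableEq l] [CommRing R] [Field F]

/-- The symplectic matrix with blocks `1, S; 0, 1`, for `S` symmetric. -/
def symplecticUpper (S : Matrix l l R) (hS : S.IsSymm) : symplecticGroup l R :=
  ⟨fromBlocks 1 S 0 1, SymplecticGroup.fromBlocks_mem_iff.mpr (by simp [hS.eq])⟩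

/-- The symplectic matrix with blocks `1, 0; S, 1`, for `S` symmetric. -/
def symplecticLower (S : Matrix l l R) (hS : S.IsSymm) : symplecticGroup l R :=
  ⟨fromBlocks 1 0 S 1, SymplecticGroup.fromBlocks_mem_iff.mpr (by simp [hS.eq])⟩

/-- The embedding of the general linear group into the symplectic group as the Levi subgroup of
matrices with blocks `A, 0; 0, (A⁻¹)ᵀ`. -/
def symplecticLevi : GL l R →* symplecticGroup l R where
  toFun A := ⟨fromBlocks A 0 0 (A⁻¹ : GL l R).valᵀ,
    SymplecticGroup.fromBlocks_mem_iff.mpr (by simp [← transpose_mul, -coe_units_inv])⟩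
  map_one' := Subtype.ext (by simp)
  map_mul' A B := Subtype.ext (by simp [fromBlocks_multiply])

variable (l R) in
/-- The subgroup of the symplectic group generated by the unitriangular block matrices. -/
def elementarySymplectic : Subgroup (symplecticGroup l R) :=
  Subgroup.closure ({M | ∃ S hS, M = symplecticUpper S hS} ∪ {M | ∃ S hS, M = symplecticLower S hS})

theorem symplecticUpper_mem_elementarySymplectic {S : Matrix l l R} (hS : S.IsSymm) :
    symplecticUpper S hS ∈ elementarySymplectic l R :=
  Subgroup.subset_closure (.inl ⟨S, hS, rfl⟩)

theorem symplecticLower_mem_elementarySymplectic {S : Matrix l l R} (hS : S.IsSymm) :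
    symplecticLower S hS ∈ elementarySymplectic l R :=
  Subgroup.subset_closure (.inr ⟨S, hS, rfl⟩)

theorem transvection_mul_swap {i j : l} (hij : i ≠ j) (c : R) :
    transvection i j c * swap R i j = swap R i j + single i i c := by
  rw [transvection, add_mul, one_mul]
  congr 1
  ext a b
  rcases eq_or_ne b i with rfl | hbi
  · rw [mul_swap_apply_left]
    simp only [single_apply, and_true]
  · rw [single_apply_of_col_ne _ _ hbi.symm]
    rcases eq_or_ne b j with rfl | hbj
    · rw [mul_swap_apply_right, single_apply_of_col_ne _ _ hij.symm]
    · rw [mul_swap_of_ne hbi hbj, single_apply_of_col_ne _ _ hbj.symm]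

theorem closure_isSymm_eq_top : Subgroup.closure {A : GL l F | A.val.IsSymm} = ⊤ := by
  refine (Subgroup.eq_top_iff' _).mpr fun A => ?_
  suffices ∃ B ∈ Subgroup.closure {A : GL l F | A.val.IsSymm}, B.val = A.val by
    obtain ⟨B, hB, hBA⟩ := this
    rwa [← Units.ext hBA]
  have of_isSymm : ∀ {M : Matrix l l F}, M.IsSymm → M.det ≠ 0 →
      ∃ B ∈ Subgroup.closure {A : GL l F | A.val.IsSymm}, B.val = M := fun {M} hM hdet =>
    ⟨GeneralLinearGroup.mkOfDetNeZero M hdet, Subgroup.subset_closure hM, rfl⟩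
  have mul : ∀ M N : Matrix l l F, (∃ B ∈ Subgroup.closure {A : GL l F | A.val.IsSymm}, B.val = M) →
      (∃ B ∈ Subgroup.closure {A : GL l F | A.val.IsSymm}, B.val = N) →
      ∃ B ∈ Subgroup.closure {A : GL l F | A.val.IsSymm}, B.val = M * N := by
    rintro _ _ ⟨B, hB, rfl⟩ ⟨C, hC, rfl⟩
    exact ⟨B * C, mul_mem hB hC, rfl⟩
  refine diagonal_transvection_induction_of_det_ne_zero
    (fun M => ∃ B ∈ Subgroup.closure {A : GL l F | A.val.IsSymm}, B.val = M) A.val A.det.ne_zero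
    (fun D hD => of_isSymm (isSymm_diagonal D) hD) ?_ fun M N _ _ => mul M N
  rintro ⟨i, j, hij, c⟩
  have hdet : (swap F i j).det ≠ 0 :=
    left_ne_zero_of_mul_eq_one (by rw [← det_mul, swap_mul_self, det_one])
  have hfactor : transvection i j c = transvection i j c * swap F i j * swap F i j := by
    rw [mul_assoc, swap_mul_self, mul_one]
  rw [TransvectionStruct.toMatrix_mk, hfactor]
  refine mul _ _ (of_isSymm ?_ ?_) (of_isSymm (isSymm_swap i j) hdet)
  · rw [transvection_mul_swap hij]
    exact (isSymm_swap i j).add (transpose_single i i c)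
  · rwa [det_mul, det_transvection_of_ne i j hij, one_mul]

theorem symplecticLevi_eq_mul_of_isSymm {A : GL l R} (hA : A.val.IsSymm)
    (hA' : (A⁻¹ : GL l R).val.IsSymm) :
    symplecticLevi A =
      (symplecticUpper A hA * symplecticLower (-A⁻¹.val) hA'.neg * symplecticUpper A hA) *
        (symplecticUpper (-1) isSymm_one.neg * symplecticLower 1 isSymm_one *
          symplecticUpper (-1) isSymm_one.neg) := by
  ext1
  simp [symplecticLevi, symplecticUpper, symplecticLower, fromBlocks_multiply, hA'.eq,
    -coe_units_inv]

theorem symplecticLevi_mem_elementarySymplectic (A : GL l F) :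
    symplecticLevi A ∈ elementarySymplectic l F := by
  suffices ⊤ ≤ (elementarySymplectic l F).comap symplecticLevi from this trivial
  rw [← closure_isSymm_eq_top, Subgroup.closure_le]
  intro A hA
  have hA' : (A⁻¹ : GL l F).val.IsSymm := by
    rw [coe_units_inv]
    exact hA.inv
  rw [SetLike.mem_coe, Subgroup.mem_comap, symplecticLevi_eq_mul_of_isSymm hA hA']
  apply_rules [mul_mem, symplecticUpper_mem_elementarySymplectic,
    symplecticLower_mem_elementarySymplectic]

theorem eq_symplecticLower_mul_levi_mul_upper {A : GL l R} {B C D : Matrix l l R}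
    (hM : fromBlocks A.val B C D ∈ symplecticGroup l R) :
    ∃ T hT S hS, (⟨_, hM⟩ : symplecticGroup l R) =
      symplecticLower T hT * symplecticLevi A * symplecticUpper S hS := by
  obtain ⟨hAC, -, hAD⟩ := SymplecticGroup.fromBlocks_mem_iff.mp hM
  have hAB : A.val * Bᵀ = B * A.valᵀ := by
    have hMt := SymplecticGroup.transpose_mem hM
    rw [fromBlocks_transpose] at hMt
    simpa using (SymplecticGroup.fromBlocks_mem_iff.mp hMt).1
  set A' : Matrix l l R := A⁻¹.val with hA'
  have hAA' : A.val * A' = 1 := A.mul_inv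
  have hA'A : A' * A.val = 1 := A.inv_mul
  have hA'At : A'ᵀ * A.valᵀ = 1 := by rw [← transpose_mul, hAA', transpose_one]
  have hAA't : A.valᵀ * A'ᵀ = 1 := by rw [← transpose_mul, hA'A, transpose_one]
  have hT : (C * A').IsSymm :=
    calc (C * A')ᵀ = A'ᵀ * (Cᵀ * A.val) * A' := by
          rw [transpose_mul, Matrix.mul_assoc, Matrix.mul_assoc, hAA', Matrix.mul_one]
      _ = C * A' := by rw [← hAC, ← Matrix.mul_assoc, hA'At, Matrix.one_mul]
  have hS : (A' * B).IsSymm :=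
    calc (A' * B)ᵀ = A' * (A.val * Bᵀ) * A'ᵀ := by
          rw [transpose_mul, ← Matrix.mul_assoc, hA'A, Matrix.one_mul]
      _ = A' * B := by rw [hAB, Matrix.mul_assoc, Matrix.mul_assoc, hAA't, Matrix.mul_one]
  have hD : D = C * A' * B + A'ᵀ :=
    calc D = A'ᵀ * (A.valᵀ * D) := by rw [← Matrix.mul_assoc, hA'At, Matrix.one_mul]
      _ = (C * A')ᵀ * B + A'ᵀ := by
          rw [sub_eq_iff_eq_add.mp hAD, Matrix.mul_add, Matrix.mul_one, add_comm,
            ← Matrix.mul_assoc, transpose_mul]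
      _ = C * A' * B + A'ᵀ := by rw [hT.eq]
  refine ⟨_, hT, _, hS, Subtype.ext ?_⟩
  have hCA : C * A' * A.val = C := by rw [Matrix.mul_assoc, hA'A, Matrix.mul_one]
  have hAB' : A.val * (A' * B) = B := by rw [← Matrix.mul_assoc, hAA', Matrix.one_mul]
  simp only [symplecticLower, symplecticUpper, symplecticLevi, MonoidHom.coe_mk, OneHom.coe_mk,
    Submonoid.coe_mul, fromBlocks_multiply, Matrix.mul_one, Matrix.one_mul, Matrix.mul_zero,
    Matrix.zero_mul, add_zero, zero_add, ← hA', hCA, hAB']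
  rw [hD, Matrix.mul_assoc]

theorem exists_finset_forall_mulVec_and_vecMul {m n : Type*} [Fintype m] [Fintype n]
    (A : Matrix m n F) : ∃ s : Finset m,
    (∀ x, (∀ i ∈ s, (A *ᵥ x) i = 0) → A *ᵥ x = 0) ∧
      ∀ y, (∀ i ∉ s, y i = 0) → y ᵥ* A = 0 → y = 0 := by
  classical
  obtain ⟨b, -, -, hspan, hli⟩ :=
    exists_linearIndepOn_extension (linearIndepOn_empty F A.row) (Set.subset_univ _)
  refine ⟨b.toFinset, fun x hx => ?_, fun y hy hyA => ?_⟩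
  · have hle : Submodule.span F (A.row '' b) ≤ LinearMap.ker ((dotProductBilin F F).flip x) := by
      rw [Submodule.span_le]
      rintro _ ⟨i, hi, rfl⟩
      exact hx i (Set.mem_toFinset.mpr hi)
    exact funext fun i => hle (hspan ⟨i, trivial, rfl⟩)
  · have hsum : ∑ i ∈ b.toFinset, y i • A.row i = 0 := by
      rw [← hyA, vecMul_eq_sum]
      exact Finset.sum_subset (Finset.subset_univ _) fun i _ hi => by rw [hy i hi, zero_smul]
    have hzero := linearIndepOn_finset_iff.mp (b.coe_toFinset.symm ▸ hli) y hsum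
    exact funext fun i => if hi : i ∈ b.toFinset then hzero i hi else hy i hi

theorem exists_det_add_diagonal_mul_ne_zero {A C : Matrix l l F} (hAC : Aᵀ * C = Cᵀ * A)
    (hker : ∀ x, A *ᵥ x = 0 → C *ᵥ x = 0 → x = 0) :
    ∃ d : l → F, (A + diagonal d * C).det ≠ 0 := by
  classical
  obtain ⟨s, hs, hs'⟩ := exists_finset_forall_mulVec_and_vecMul A
  refine ⟨fun i => if i ∈ s then 0 else 1, fun hdet => ?_⟩
  obtain ⟨x, hx0, hx⟩ := exists_mulVec_eq_zero_iff.mpr hdet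
  have hxi : ∀ i, (A *ᵥ x) i + (if i ∈ s then 0 else 1) * (C *ᵥ x) i = 0 := fun i => by
    simpa only [add_mulVec, ← mulVec_mulVec, Pi.add_apply, mulVec_diagonal,
      Pi.zero_apply] using congrFun hx i
  have hAx : A *ᵥ x = 0 := hs x fun i hi => by simpa [hi] using hxi i
  refine hx0 (hker x hAx (hs' _ (fun i hi => by simpa [hi, hAx] using hxi i) ?_))
  rw [← vecMul_transpose, vecMul_vecMul, ← hAC, ← vecMul_vecMul, vecMul_transpose, hAx,
    zero_vecMul]

theorem elementarySymplectic_eq_top : elementarySymplectic l F = ⊤ := by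
  refine (Subgroup.eq_top_iff' _).mpr ?_
  rintro ⟨M, hM⟩
  obtain ⟨A, B, C, D, rfl⟩ : ∃ A B C D, M = fromBlocks A B C D :=
    ⟨_, _, _, _, (fromBlocks_toBlocks M).symm⟩
  have hker : ∀ x, A *ᵥ x = 0 → C *ᵥ x = 0 → x = 0 := fun x hA hC => by
    have hx : fromBlocks A B C D *ᵥ Sum.elim x 0 = 0 := by simp [fromBlocks_mulVec, hA, hC]
    have := eq_zero_of_mulVec_eq_zero (SymplecticGroup.symplectic_det hM).ne_zero hx
    exact funext fun i => congrFun this (.inl i)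
  obtain ⟨d, hdet⟩ :=
    exists_det_add_diagonal_mul_ne_zero (SymplecticGroup.fromBlocks_mem_iff.mp hM).1 hker
  rw [← Subgroup.mul_mem_cancel_left _
    (symplecticUpper_mem_elementarySymplectic (isSymm_diagonal d))]
  have hN : fromBlocks (GeneralLinearGroup.mkOfDetNeZero _ hdet).val (B + diagonal d * D) C D ∈
      symplecticGroup l F := by
    have := (symplecticUpper (diagonal d) (isSymm_diagonal d) * ⟨_, hM⟩).2
    simpa [symplecticUpper, fromBlocks_multiply] using this
  obtain ⟨T, hT, S, hS, hN'⟩ := eq_symplecticLower_mul_levi_mul_upper hN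
  have heq : symplecticUpper (diagonal d) (isSymm_diagonal d) * ⟨_, hM⟩ = ⟨_, hN⟩ :=
    Subtype.ext (by simp [symplecticUpper, fromBlocks_multiply])
  rw [heq, hN']
  exact mul_mem (mul_mem (symplecticLower_mem_elementarySymplectic hT)
    (symplecticLevi_mem_elementarySymplectic _)) (symplecticUpper_mem_elementarySymplectic hS)

end SymplecticGeneration

section SymplecticPerfect

open scoped commutatorElement

variable {l R F : Type*} [Fintype l] [DecidableEq l] [CommRing R] [Field F]

theorem coe_symplecticLevi_smul_one (c : Rˣ) :
    (symplecticLevi (c • (1 : GL l R))).val =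
      fromBlocks ((c : R) • 1) 0 0 (((c⁻¹ : Rˣ) : R) • 1) := by
  have hinv : (c • (1 : GL l R))⁻¹ = c⁻¹ • 1 := by
    rw [inv_eq_iff_mul_eq_one]
    ext1
    simp [Units.smul_def, -coe_units_inv, smul_smul]
  simp [symplecticLevi, hinv, Units.smul_def, -coe_units_inv]

theorem commutatorElement_symplecticLevi_upper (c : Rˣ) {S : Matrix l l R} (hS : S.IsSymm) :
    ⁅symplecticLevi (c • (1 : GL l R)), symplecticUpper S hS⁆ =
      symplecticUpper ((c ^ 2 - 1 : R) • S) (hS.smul _) := by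
  have hc : (c : R) • S = ((c⁻¹ : Rˣ) : R) • (S + (c ^ 2 - 1 : R) • S) := by
    have : (c : R) = ((c⁻¹ : Rˣ) : R) * c ^ 2 := by rw [sq, c.inv_mul_cancel_left]
    rw [sub_smul, one_smul, add_sub_cancel, smul_smul, ← this]
  rw [commutatorElement_def, mul_inv_eq_iff_eq_mul, mul_inv_eq_iff_eq_mul]
  ext1
  simpa [coe_symplecticLevi_smul_one, symplecticUpper, fromBlocks_multiply] using hc

theorem commutatorElement_symplecticLevi_lower (c : Rˣ) {S : Matrix l l R} (hS : S.IsSymm) :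
    ⁅symplecticLevi (c⁻¹ • (1 : GL l R)), symplecticLower S hS⁆ =
      symplecticLower ((c ^ 2 - 1 : R) • S) (hS.smul _) := by
  have hc : (c : R) • S = ((c⁻¹ : Rˣ) : R) • ((c ^ 2 - 1 : R) • S + S) := by
    have : (c : R) = ((c⁻¹ : Rˣ) : R) * c ^ 2 := by rw [sq, c.inv_mul_cancel_left]
    rw [sub_smul, one_smul, sub_add_cancel, smul_smul, ← this]
  rw [commutatorElement_def, mul_inv_eq_iff_eq_mul, mul_inv_eq_iff_eq_mul]
  ext1
  simpa [coe_symplecticLevi_smul_one, symplecticLower, fromBlocks_multiply] using hc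

theorem isPerfect_symplecticGroup (c : Fˣ) (hc : (c ^ 2 - 1 : F) ≠ 0) :
    Group.IsPerfect (symplecticGroup l F) where
  commutator_eq_top := by
    rw [eq_top_iff, ← elementarySymplectic_eq_top, elementarySymplectic, Subgroup.closure_le]
    rintro _ (⟨S, hS, rfl⟩ | ⟨S, hS, rfl⟩)
    · have := commutatorElement_symplecticLevi_upper c (hS.smul (c ^ 2 - 1 : F)⁻¹)
      simp only [smul_inv_smul₀ hc] at this
      exact this ▸ Subgroup.commutator_mem_commutator trivial trivial
    · have := commutatorElement_symplecticLevi_lower c (hS.smul (c ^ 2 - 1 : F)⁻¹)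
      simp only [smul_inv_smul₀ hc] at this
      exact this ▸ Subgroup.commutator_mem_commutator trivial trivial

theorem nontrivial_symplecticGroup [Nonempty l] [Nontrivial R] :
    Nontrivial (symplecticGroup l R) := by
  refine ⟨1, SymplecticGroup.symJ l R, fun h => ?_⟩
  obtain ⟨i⟩ := ‹Nonempty l›
  have := congrFun₂ (congrArg Subtype.val h) (.inl i) (.inl i)
  simp [J] at this

end SymplecticPerfect

/-! ### Strong approximation -/

section SymplecticReduction

variable {l R S : Type*} [Fintype l] [DecidableEq l] [CommRing R] [CommRing S]

variable (l) in
/-- The entrywise map of symplectic groups induced by a homomorphism of rings. -/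
def symplecticMap (φ : R →+* S) : symplecticGroup l R →* symplecticGroup l S where
  toFun M := ⟨M.1.map φ, SymplecticGroup.map_mem M.2 φ⟩
  map_one' := Subtype.ext (by simp)
  map_mul' M N := Subtype.ext (Matrix.map_mul (f := φ))

theorem symplecticMap_symplecticUpper (φ : R →+* S) {A : Matrix l l R} (hA : A.IsSymm) :
    symplecticMap l φ (symplecticUpper A hA) = symplecticUpper (A.map φ) (hA.map φ) :=
  Subtype.ext (by simp [symplecticMap, symplecticUpper, fromBlocks_map])

theorem symplecticMap_symplecticLower (φ : R →+* S) {A : Matrix l l R} (hA : A.IsSymm) :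
    symplecticMap l φ (symplecticLower A hA) = symplecticLower (A.map φ) (hA.map φ) :=
  Subtype.ext (by simp [symplecticMap, symplecticLower, fromBlocks_map])

theorem pi_symplecticMap_surjective {ι : Type*} [Finite ι] {F : ι → Type*} [∀ i, Field (F i)]
    {φ : ∀ i, R →+* F i} (hφ : Function.Surjective (RingHom.pi φ)) :
    Function.Surjective (MonoidHom.pi fun i => symplecticMap l (φ i)) := by
  classical
  rw [← MonoidHom.range_eq_top, Subgroup.eq_top_iff']
  refine fun x => Subgroup.pi_mem_of_mulSingle_mem x fun i => ?_
  suffices ⊤ ≤ (MonoidHom.pi fun i => symplecticMap l (φ i)).range.comap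
      (MonoidHom.mulSingle (fun i => symplecticGroup l (F i)) i) from this trivial
  have hlift (A : Matrix l l (F i)) (hA : A.IsSymm) :
      ∃ B : Matrix l l R, B.IsSymm ∧ B.map (φ i) = A ∧ ∀ j ≠ i, B.map (φ j) = 0 := by
    obtain ⟨s, hs⟩ := hφ.hasRightInverse
    have hs' (a : F i) (j : ι) : φ j (s (Pi.single i a)) = (Pi.single i a : ∀ i, F i) j :=
      congrFun (hs (Pi.single i a)) j
    exact ⟨A.map fun a => s (Pi.single i a), hA.map _, by ext; simp [hs'],
      fun j hj => by ext; simp [hs', hj]⟩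
  rw [← elementarySymplectic_eq_top, elementarySymplectic, Subgroup.closure_le]
  rintro _ (⟨A, hA, rfl⟩ | ⟨A, hA, rfl⟩)
  · obtain ⟨B, hB, rfl, hBj⟩ := hlift A hA
    refine ⟨symplecticUpper B hB, funext fun j => ?_⟩
    rw [MonoidHom.pi_apply, symplecticMap_symplecticUpper]
    rcases eq_or_ne j i with rfl | hj
    · simp
    · simp [hj, hBj, symplecticUpper]
  · obtain ⟨B, hB, rfl, hBj⟩ := hlift A hA
    refine ⟨symplecticLower B hB, funext fun j => ?_⟩
    rw [MonoidHom.pi_apply, symplecticMap_symplecticLower]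
    rcases eq_or_ne j i with rfl | hj
    · simp
    · simp [hj, hBj, symplecticLower]

theorem pi_intCast_zmod_surjective {ι : Type*} [Finite ι] {n : ι → ℕ}
    (hn : Pairwise (Function.onFun Nat.Coprime n)) :
    Function.Surjective (RingHom.pi fun i => Int.castRingHom (ZMod (n i))) := fun x => by
  have := Fintype.ofFinite ι
  obtain ⟨m, hm⟩ := ZMod.intCast_surjective ((ZMod.prodEquivPi n hn).symm x)
  refine ⟨m, ?_⟩
  rw [← (ZMod.prodEquivPi n hn).apply_symm_apply x, ← hm, map_intCast]
  rfl

end SymplecticReduction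

/-! ### Irreducible characteristic polynomials over finite fields -/

section TwistedTraceForm

open Module

variable {F K l : Type*} [Field F] [Field K] [Algebra F K] [Fintype l] [DecidableEq l]

/-- The bilinear form `(x, y) ↦ Tr (c x σ(y))` on `K` over `F`. When `σ` is an involution and
`σ c = -c` it is alternating, and the elements of `K` with `u σ(u) = 1` act by isometries. -/
noncomputable def twistedTraceForm (σ : K ≃ₐ[F] K) (c : K) : LinearMap.BilinForm F K :=
  (Algebra.traceForm F K).comp (LinearMap.mulLeft F c) σ.toLinearMap

theorem twistedTraceForm_apply (σ : K ≃ₐ[F] K) (c x y : K) :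
    twistedTraceForm σ c x y = Algebra.trace F K (c * x * σ y) :=
  rfl

theorem trace_eq_zero_of_apply_eq_neg (h2 : (2 : F) ≠ 0) {σ : K ≃ₐ[F] K} {x : K}
    (hx : σ x = -x) : Algebra.trace F K x = 0 := by
  have h := Algebra.trace_eq_of_algEquiv σ x
  rw [hx, map_neg] at h
  exact (mul_eq_zero.1 (by linear_combination -h : (2 : F) * Algebra.trace F K x = 0)).resolve_left
    h2

theorem trace_half_coe_of_finrank_eq_two (h2 : (2 : F) ≠ 0) [FiniteDimensional F K]
    {L : IntermediateField F K} (hL : finrank L K = 2) (a : L) :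
    Algebra.trace F K (2⁻¹ * a) = Algebra.trace F L a := by
  have htwo : (2⁻¹ * a : K) = algebraMap L K ((2 : F)⁻¹ • a) := by
    simp [Algebra.smul_def, map_ofNat (algebraMap F K) 2]
  rw [htwo, ← Algebra.trace_trace (S := L), Algebra.trace_algebraMap, hL, map_nsmul, map_smul,
    smul_eq_mul, nsmul_eq_mul, Nat.cast_ofNat, mul_inv_cancel_left₀ h2]

/-- A basis `e` of a subfield `L` together with `θ` times its trace-dual basis. When `K` is
quadratic over `L` and `θ` is antisymmetric, this is a symplectic basis of `K` over `F`. -/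
noncomputable def traceDualDouble {L : IntermediateField F K} [FiniteDimensional F L]
    [Algebra.IsSeparable F L] (e : Basis l F L) (θ : K) : l ⊕ l → K :=
  Sum.elim (fun i => (e i : K)) fun i => θ * (e.traceDual i : K)

theorem gram_traceDualDouble_eq_J (h2 : (2 : F) ≠ 0) [FiniteDimensional F K]
    [Algebra.IsSeparable F K] {σ : K ≃ₐ[F] K} {L : IntermediateField F K}
    (hσL : ∀ a : L, σ a = a) (hL : finrank L K = 2) {θ : K} (hθ : θ ≠ 0) (hσθ : σ θ = -θ)
    (e : Basis l F L) :
    Matrix.of (fun i j => twistedTraceForm σ (2 * θ)⁻¹ (traceDualDouble e θ i)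
      (traceDualDouble e θ j)) = Matrix.J l F := by
  have hσ2 : σ 2 = 2 := map_ofNat σ 2
  have half (a b : L) : (2 * θ)⁻¹ * (θ * (a : K)) * b = 2⁻¹ * ((a * b : L) : K) := by
    push_cast
    field_simp
  ext (i | i) (j | j) <;>
    simp only [of_apply, twistedTraceForm_apply, traceDualDouble, Sum.elim_inl, Sum.elim_inr,
      Matrix.J, fromBlocks_apply₁₁, fromBlocks_apply₁₂, fromBlocks_apply₂₁, fromBlocks_apply₂₂,
      Matrix.zero_apply, Matrix.neg_apply, Matrix.one_apply, map_mul, hσL, hσθ]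
  · exact trace_eq_zero_of_apply_eq_neg h2 (σ := σ) (by simp [hσL, hσθ, hσ2])
  · rw [show (2 * θ)⁻¹ * (e i : K) * (-θ * e.traceDual j) =
        -((2 * θ)⁻¹ * (θ * (e i : K)) * e.traceDual j) by ring, half, map_neg,
      trace_half_coe_of_finrank_eq_two h2 hL, Basis.trace_mul_traceDual]
  · rw [half, trace_half_coe_of_finrank_eq_two h2 hL, Basis.trace_traceDual_mul]
    simp [eq_comm]
  · exact trace_eq_zero_of_apply_eq_neg h2 (σ := σ) (by simp [hσL, hσθ, hσ2])

theorem linearIndependent_of_isUnit_det_gram {V ι : Type*} [AddCommGroup V] [Module F V] [Fintype ι]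
    [DecidableEq ι] (B : LinearMap.BilinForm F V) {v : ι → V}
    (hv : IsUnit (Matrix.of fun i j => B (v i) (v j)).det) : LinearIndependent F v := by
  refine Fintype.linearIndependent_iff.2 fun w hw =>
    congrFun (eq_zero_of_vecMul_eq_zero hv.ne_zero ?_)
  ext j
  calc (w ᵥ* Matrix.of fun i j => B (v i) (v j)) j = B (∑ i, w i • v i) (v j) := by
        simp [vecMul, dotProduct]
    _ = 0 := by rw [hw, map_zero, LinearMap.zero_apply]

theorem exists_basis_toMatrix_twistedTraceForm_eq_J (h2 : (2 : F) ≠ 0) [FiniteDimensional F K]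
    [Algebra.IsSeparable F K] {σ : K ≃ₐ[F] K} (hσ : orderOf σ = 2)
    (hK : finrank F K = 2 * Fintype.card l) :
    ∃ c ≠ 0, ∃ b : Basis (l ⊕ l) F K,
      LinearMap.BilinForm.toMatrix b (twistedTraceForm σ c) = Matrix.J l F := by
  have hσσ (x : K) : σ (σ x) = x := DFunLike.congr_fun (sq σ ▸ hσ ▸ pow_orderOf_eq_one σ) x
  obtain ⟨x, hx⟩ : ∃ x, σ x ≠ x := by
    by_contra! h
    simp [show σ = 1 from AlgEquiv.ext h] at hσ
  set L : IntermediateField F K := IntermediateField.fixedField (Subgroup.zpowers σ)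
  have hσL (a : L) : σ a = a := a.2 ⟨σ, Subgroup.mem_zpowers σ⟩
  have hKL : finrank L K = 2 := by
    rw [IntermediateField.finrank_fixedField_eq_card, Nat.card_zpowers, hσ]
  have hL : finrank F L = Fintype.card l := by
    have := finrank_mul_finrank F L K
    lia
  have hθ : x - σ x ≠ 0 := sub_ne_zero.2 hx.symm
  have hσθ : σ (x - σ x) = -(x - σ x) := by rw [map_sub, hσσ, neg_sub]
  have e : Basis l F L := (finBasisOfFinrankEq F L hL).reindex (Fintype.equivFin l).symm
  have hgram := gram_traceDualDouble_eq_J h2 hσL hKL hθ hσθ e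
  have hli : LinearIndependent F (traceDualDouble e (x - σ x)) :=
    linearIndependent_of_isUnit_det_gram _ (hgram ▸ isUnit_det_J l F)
  have h2K : (2 : K) ≠ 0 := map_ofNat (algebraMap F K) 2 ▸ (map_ne_zero (algebraMap F K)).2 h2
  refine ⟨_, inv_ne_zero (mul_ne_zero h2K hθ),
    basisOfLinearIndependentOfCardEqFinrank' _ hli (by simp [hK, two_mul]), ?_⟩
  ext i j
  rw [LinearMap.BilinForm.toMatrix_apply, coe_basisOfLinearIndependentOfCardEqFinrank', ← hgram,
    of_apply]

end TwistedTraceForm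

section SymplecticTorus

open Module IntermediateField

variable {F K l : Type*} [Field F] [Field K] [Algebra F K] [Fintype l] [DecidableEq l]

theorem toMatrix_mem_symplecticGroup_iff {V : Type*} [AddCommGroup V] [Module F V]
    {B : LinearMap.BilinForm F V} {b : Basis (l ⊕ l) F V}
    (hb : LinearMap.BilinForm.toMatrix b B = Matrix.J l F) (φ : V →ₗ[F] V) :
    LinearMap.toMatrix b b φ ∈ symplecticGroup l F ↔ ∀ x y, B (φ x) (φ y) = B x y := by
  rw [SymplecticGroup.mem_iff', ← hb, ← LinearMap.BilinForm.toMatrix_comp b b,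
    (LinearMap.BilinForm.toMatrix b).injective.eq_iff, LinearMap.ext_iff₂]
  simp only [LinearMap.BilinForm.comp_apply]

theorem card_le_natDegree_of_isRoot {R α : Type*} [CommRing R] [IsDomain R] {p : Polynomial R}
    (hp : p ≠ 0) {s : Finset α} {f : α → R} (hf : Set.InjOn f s)
    (hroot : ∀ a ∈ s, p.IsRoot (f a)) : s.card ≤ p.natDegree := by
  classical
  rw [← Finset.card_image_of_injOn hf]
  refine Polynomial.card_le_degree_of_subset_roots fun x hx => ?_
  obtain ⟨a, ha, rfl⟩ := Finset.mem_image.1 hx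
  exact (Polynomial.mem_roots hp).2 (hroot a ha)

/-- The elements `u` of `Kˣ` with `u σ(u) = 1`: for an involution `σ`, the kernel of the norm from
`K` to the fixed field of `σ`. -/
def normOneSubgroup (σ : K ≃ₐ[F] K) : Subgroup Kˣ :=
  (MonoidHom.id Kˣ * Units.map (σ : K →* K)).ker

theorem mem_normOneSubgroup {σ : K ≃ₐ[F] K} {u : Kˣ} :
    u ∈ normOneSubgroup σ ↔ (u : K) * σ u = 1 := by
  simp [normOneSubgroup, MonoidHom.mem_ker, Units.ext_iff]

variable {σ : K ≃ₐ[F] K} {c : K} {b : Basis (l ⊕ l) F K}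

theorem leftMulMatrix_mem_symplecticGroup_iff [FiniteDimensional F K] [Algebra.IsSeparable F K]
    (hb : LinearMap.BilinForm.toMatrix b (twistedTraceForm σ c) = Matrix.J l F) (hc : c ≠ 0)
    (u : K) : Algebra.leftMulMatrix b u ∈ symplecticGroup l F ↔ u * σ u = 1 := by
  have hisom : Algebra.leftMulMatrix b u ∈ symplecticGroup l F ↔
      ∀ x y, twistedTraceForm σ c (u * x) (u * y) = twistedTraceForm σ c x y :=
    toMatrix_mem_symplecticGroup_iff hb (LinearMap.mulLeft F u)
  simp only [hisom, twistedTraceForm_apply, map_mul]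
  refine ⟨fun h => ?_, fun h x y => congrArg _ (by linear_combination (c * x * σ y) * h)⟩
  have htrace (x : K) : Algebra.traceForm F K (c * (u * σ u - 1)) x = 0 := by
    rw [Algebra.traceForm_apply, show c * (u * σ u - 1) * x =
      c * (u * x) * (σ u * σ 1) - c * x * σ 1 by rw [map_one]; ring, map_sub, h, sub_self]
  have hzero := (traceForm_nondegenerate F K).1 _ htrace
  exact sub_eq_zero.1 ((mul_eq_zero.1 hzero).resolve_left hc)

/-- The norm-one elements of `K` acting on `K` by multiplication, written as symplectic matrices
in a basis in which the twisted trace form is the standard symplectic form. -/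
noncomputable def symplecticTorus
    (hb : LinearMap.BilinForm.toMatrix b (twistedTraceForm σ c) = Matrix.J l F)
    [FiniteDimensional F K] [Algebra.IsSeparable F K] (hc : c ≠ 0) :
    normOneSubgroup σ →* symplecticGroup l F where
  toFun u := ⟨Algebra.leftMulMatrix b (u : Kˣ),
    (leftMulMatrix_mem_symplecticGroup_iff hb hc _).2 (mem_normOneSubgroup.1 u.2)⟩
  map_one' := Subtype.ext (map_one _)
  map_mul' _ _ := Subtype.ext (map_mul _ _ _)

theorem symplecticTorus_coe
    (hb : LinearMap.BilinForm.toMatrix b (twistedTraceForm σ c) = Matrix.J l F)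
    [FiniteDimensional F K] [Algebra.IsSeparable F K] (hc : c ≠ 0) (u : normOneSubgroup σ) :
    (symplecticTorus hb hc u : Matrix (l ⊕ l) (l ⊕ l) F) =
      Algebra.leftMulMatrix b ((u : Kˣ) : K) :=
  rfl

theorem exists_eq_leftMulMatrix_of_commute {ι : Type*} [Fintype ι] [DecidableEq ι]
    [FiniteDimensional F K] {b : Basis ι F K} {u : K} (hu : F⟮u⟯ = ⊤) {N : Matrix ι ι F}
    (hN : Commute N (Algebra.leftMulMatrix b u)) : ∃ v, N = Algebra.leftMulMatrix b v := by
  obtain ⟨φ, rfl⟩ := (LinearMap.toMatrixAlgEquiv b).surjective N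
  have hφu : φ * LinearMap.mulLeft F u = LinearMap.mulLeft F u * φ :=
    (LinearMap.toMatrixAlgEquiv b).injective (by rw [map_mul, map_mul]; exact hN)
  have hadjoin : Algebra.adjoin F {u} = ⊤ := adjoin_eq_top_iff.1 hu
  have hφ (y x : K) : φ (y * x) = y * φ x := by
    induction (hadjoin ▸ trivial : y ∈ Algebra.adjoin F {u}) using Algebra.adjoin_induction
      generalizing x with
    | mem y hy => exact Set.mem_singleton_iff.1 hy ▸ LinearMap.congr_fun hφu x
    | algebraMap r => simp only [← Algebra.smul_def, map_smul]
    | add y z _ _ hy hz => rw [add_mul, map_add, hy, hz, add_mul]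
    | mul y z _ _ hy hz => rw [mul_assoc, hy, hz, mul_assoc]
  refine ⟨φ 1, congrArg (LinearMap.toMatrixAlgEquiv b) (LinearMap.ext fun x => ?_)⟩
  rw [← mul_one x, hφ, mul_one, mul_comm, Algebra.coe_lmul_eq_mul, LinearMap.mul_apply']

theorem charpoly_leftMulMatrix_eq_minpoly {ι : Type*} [Fintype ι] [DecidableEq ι]
    [FiniteDimensional F K] (b : Basis ι F K) {u : K} (hu : F⟮u⟯ = ⊤) :
    (Algebra.leftMulMatrix b u).charpoly = minpoly F u := by
  refine Polynomial.eq_of_monic_of_dvd_of_natDegree_le (minpoly.monic (IsIntegral.of_finite _ u))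
    (Matrix.charpoly_monic _) (minpoly.dvd _ _ (Algebra.leftMulMatrix_injective b ?_)) ?_
  · rw [← Polynomial.aeval_algHom_apply, Matrix.aeval_self_charpoly, map_zero]
  · rw [Matrix.charpoly_natDegree_eq_dim,
      (Field.primitive_element_iff_minpoly_natDegree_eq F u).1 hu, finrank_eq_card_basis b]

theorem charpoly_eq_of_isConj {M N : symplecticGroup l F} (h : IsConj M N) :
    (M : Matrix (l ⊕ l) (l ⊕ l) F).charpoly = (N : Matrix (l ⊕ l) (l ⊕ l) F).charpoly := by
  obtain ⟨x, hx : (x : Matrix (l ⊕ l) (l ⊕ l) F) * M.1 = N.1 * x⟩ :=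
    (symplecticGroup l F).subtype.map_isConj h
  rw [← charpoly_units_conj x, hx, ← coe_units_inv, Units.mul_inv_cancel_right]

variable [FiniteDimensional F K] [Algebra.IsSeparable F K]

theorem centralizer_symplecticTorus_le_range
    (hb : LinearMap.BilinForm.toMatrix b (twistedTraceForm σ c) = Matrix.J l F) (hc : c ≠ 0)
    {u : normOneSubgroup σ} (hu : F⟮((u : Kˣ) : K)⟯ = ⊤) :
    Subgroup.centralizer {symplecticTorus hb hc u} ≤ (symplecticTorus hb hc).range := by
  intro M hM
  obtain ⟨v, hv⟩ := exists_eq_leftMulMatrix_of_commute hu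
    (congrArg Subtype.val (Subgroup.mem_centralizer_singleton_iff.1 hM) : _)
  have hnorm : v * σ v = 1 := (leftMulMatrix_mem_symplecticGroup_iff hb hc v).1 (hv ▸ M.2)
  exact ⟨⟨.mkOfMulEqOne v (σ v) hnorm, mem_normOneSubgroup.2 hnorm⟩, Subtype.ext hv.symm⟩

theorem card_centralizer_symplecticTorus_le [Finite K]
    (hb : LinearMap.BilinForm.toMatrix b (twistedTraceForm σ c) = Matrix.J l F) (hc : c ≠ 0)
    {u : normOneSubgroup σ} (hu : F⟮((u : Kˣ) : K)⟯ = ⊤) :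
    Nat.card (Subgroup.centralizer {symplecticTorus hb hc u}) ≤ Nat.card (normOneSubgroup σ) :=
  have : Finite (symplecticTorus hb hc).range := Finite.Set.finite_range _
  (Nat.card_mono (Set.toFinite _) (centralizer_symplecticTorus_le_range hb hc hu)).trans
    (Nat.card_le_card_of_surjective _ (symplecticTorus hb hc).rangeRestrict_surjective)

theorem card_isConj_symplecticTorus_le
    (hb : LinearMap.BilinForm.toMatrix b (twistedTraceForm σ c) = Matrix.J l F) (hc : c ≠ 0)
    {X : Finset (normOneSubgroup σ)} (hX : ∀ u ∈ X, F⟮((u : Kˣ) : K)⟯ = ⊤)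
    [DecidableRel (IsConj (α := symplecticGroup l F))] (M : symplecticGroup l F) :
    {u ∈ X | IsConj (symplecticTorus hb hc u) M}.card ≤ 2 * Fintype.card l := by
  set q : Polynomial F := (M : Matrix (l ⊕ l) (l ⊕ l) F).charpoly
  have hq : q.Monic := charpoly_monic _
  have hdeg : (q.map (algebraMap F K)).natDegree = 2 * Fintype.card l := by
    rw [Polynomial.natDegree_map, charpoly_natDegree_eq_dim, Fintype.card_sum, two_mul]
  rw [← hdeg]
  refine card_le_natDegree_of_isRoot (f := fun u : normOneSubgroup σ => ((u : Kˣ) : K))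
    (hq.map _).ne_zero (Units.val_injective.comp Subtype.val_injective).injOn fun u hu => ?_
  obtain ⟨huX, hconj⟩ := Finset.mem_filter.1 hu
  have hminpoly : q = minpoly F ((u : Kˣ) : K) :=
    (charpoly_eq_of_isConj hconj).symm.trans (charpoly_leftMulMatrix_eq_minpoly b (hX u huX))
  rw [hminpoly, Polynomial.IsRoot, Polynomial.eval_map_algebraMap, minpoly.aeval]

end SymplecticTorus

section ConjugacyCounting

open Finset

variable {G κ : Type*} [Group G] [Fintype G] [DecidableRel (IsConj (α := G))]

theorem card_isConj_mul_card_centralizer (x : G) :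
    #{y | IsConj x y} * Nat.card (Subgroup.centralizer {x}) = Fintype.card G := by
  classical
  rw [Subgroup.nat_card_centralizer_nat_card_stabilizer, Nat.card_eq_fintype_card,
    ← ConjAct.card (G := G), ← MulAction.card_orbit_mul_card_stabilizer_eq_card_group (ConjAct G) x]
  congr 1
  rw [← Set.toFinset_card]
  congr 1
  ext y
  rw [mem_filter_univ, Set.mem_toFinset, ConjAct.mem_orbit_conjAct, isConj_comm]

theorem card_mul_card_le_of_isConj_mem {X : Finset κ} {t : κ → G} {A : Finset G} {c d : ℕ}
    (hc : ∀ k ∈ X, Nat.card (Subgroup.centralizer {t k}) ≤ c)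
    (hd : ∀ x, #{k ∈ X | IsConj (t k) x} ≤ d)
    (hA : ∀ k ∈ X, ∀ x, IsConj (t k) x → x ∈ A) :
    Fintype.card G * #X ≤ c * d * #A := by
  have hclass : ∀ k ∈ X, Fintype.card G ≤ c * #{x ∈ A | IsConj (t k) x} := fun k hk => by
    rw [← card_isConj_mul_card_centralizer (t k), mul_comm]
    exact Nat.mul_le_mul (hc k hk)
      (card_le_card fun x hx => mem_filter.2 ⟨hA k hk x (mem_filter.1 hx).2, (mem_filter.1 hx).2⟩)
  calc Fintype.card G * #X = ∑ _k ∈ X, Fintype.card G := by rw [sum_const, smul_eq_mul, mul_comm]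
    _ ≤ ∑ k ∈ X, c * #{x ∈ A | IsConj (t k) x} := sum_le_sum hclass
    _ = c * ∑ x ∈ A, #{k ∈ X | IsConj (t k) x} := by
        rw [← mul_sum]
        exact congrArg _ (sum_card_bipartiteAbove_eq_sum_card_bipartiteBelow _)
    _ ≤ c * (#A * d) := by gcongr; exact sum_le_card_nsmul _ _ _ fun x _ => hd x
    _ = c * d * #A := by ring

end ConjugacyCounting

section NormOneCounting

open Module IntermediateField Finset

variable {F K : Type*} [Field F] [Field K] [Algebra F K] {σ : K ≃ₐ[F] K}

theorem mem_normOneSubgroup_iff_pow_eq_one {Q : ℕ} (hσ : ∀ x, σ x = x ^ Q) {u : Kˣ} :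
    u ∈ normOneSubgroup σ ↔ u ^ (Q + 1) = 1 := by
  rw [mem_normOneSubgroup, hσ, ← pow_succ', Units.ext_iff, Units.val_pow_eq_pow_val, Units.val_one]

theorem card_normOneSubgroup [Finite K] {Q : ℕ} (hσ : ∀ x, σ x = x ^ Q)
    (hK : Nat.card K = Q ^ 2) : Nat.card (normOneSubgroup σ) = Q + 1 := by
  have hker : normOneSubgroup σ = (powMonoidHom (Q + 1) : Kˣ →* Kˣ).ker := by
    ext u
    rw [mem_normOneSubgroup_iff_pow_eq_one hσ, MonoidHom.mem_ker, powMonoidHom_apply]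
  rw [hker, IsCyclic.card_powMonoidHom_ker, Nat.card_units, hK, ← one_pow 2, Nat.sq_sub_sq]
  exact Nat.gcd_mul_right_left _ _

variable [Finite K] {g : ℕ}

theorem pow_card_pow_finrank_adjoin (u : K) : u ^ Nat.card F ^ finrank F F⟮u⟯ = u := by
  have := Fintype.ofFinite F⟮u⟯
  rw [← Module.natCard_eq_pow_finrank, Nat.card_eq_fintype_card]
  exact congrArg Subtype.val (FiniteField.pow_card (⟨u, mem_adjoin_simple_self F u⟩ : F⟮u⟯))

theorem exists_pow_card_pow_eq_self (hK : finrank F K = 2 * g) {u : K} (hu : F⟮u⟯ ≠ ⊤) :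
    ∃ m, 1 ≤ m ∧ m ≤ g ∧ u ^ Nat.card F ^ m = u := by
  have hu1 : finrank F⟮u⟯ K ≠ 1 := fun h => hu (finrank_eq_one_iff_eq_top.1 h)
  have hu0 : 0 < finrank F⟮u⟯ K := finrank_pos
  have hmul := finrank_mul_finrank F F⟮u⟯ K
  refine ⟨_, finrank_pos, ?_, pow_card_pow_finrank_adjoin (F := F) u⟩
  nlinarith [show 2 ≤ finrank F⟮u⟯ K by lia]

variable [Finite F]

-- Such a `u` is fixed by the `m`-th power of the Frobenius for a proper divisor `m` of `2 * g`. If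
-- `m = g`, then `σ u = u`, so that `u ^ 2 = 1`.
theorem card_le_of_adjoin_ne_top (hσ : ∀ x, σ x = x ^ Nat.card F ^ g) (hK : finrank F K = 2 * g)
    {U : Finset (normOneSubgroup σ)} (hU : ∀ u ∈ U, F⟮((u : Kˣ) : K)⟯ ≠ ⊤) :
    #U ≤ 2 + g * Nat.card F ^ (g - 1) := by
  have hq : 1 < Nat.card F := Finite.one_lt_card
  set f : ℕ → K[X] := fun m => X ^ Nat.card F ^ m - X
  have hf (m) (hm : m ∈ Ico 1 g) : f m ≠ 0 :=
    FiniteField.X_pow_card_pow_sub_X_ne_zero K (Nat.one_le_iff_ne_zero.1 (mem_Ico.1 hm).1) hq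
  have hfdeg (m) (hm : m ∈ Ico 1 g) : (f m).natDegree ≤ Nat.card F ^ (g - 1) := by
    obtain ⟨h1, hg⟩ := mem_Ico.1 hm
    rw [FiniteField.X_pow_card_pow_sub_X_natDegree_eq K (by lia) hq]
    exact Nat.pow_le_pow_right hq.le (by lia)
  have hdeg : ((X ^ 2 - C 1) * ∏ m ∈ Ico 1 g, f m).natDegree ≤ 2 + g * Nat.card F ^ (g - 1) := by
    refine natDegree_mul_le_of_le natDegree_X_pow_sub_C.le ((natDegree_prod_le _ _).trans ?_)
    refine (sum_le_card_nsmul _ _ _ hfdeg).trans ?_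
    rw [Nat.card_Ico, smul_eq_mul]
    exact Nat.mul_le_mul_right _ (Nat.sub_le _ _)
  refine (card_le_natDegree_of_isRoot
    (mul_ne_zero (X_pow_sub_C_ne_zero two_pos 1) (prod_ne_zero_iff.2 hf))
    (Units.val_injective.comp Subtype.val_injective).injOn fun u hu => ?_).trans hdeg
  obtain ⟨m, hm, hmg, hpow⟩ := exists_pow_card_pow_eq_self hK (hU u hu)
  rcases hmg.eq_or_lt with rfl | hmg
  · refine root_mul_right_of_isRoot _ ?_
    have hnorm := mem_normOneSubgroup.1 u.2
    rw [hσ, hpow, ← sq] at hnorm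
    simp [hnorm]
  · refine root_mul_left_of_isRoot _ ((isRoot_prod _ _ _).2 ⟨m, mem_Ico.2 ⟨hm, hmg⟩, ?_⟩)
    simp [f, hpow]

/-- The polynomial `X ^ q ^ (g - 1) * (∑ i < g, (X ^ q ^ i + X ^ (-q ^ i)) - a)`. On elements of
norm one, where the trace is `∑ i < g, (u ^ q ^ i + u ^ (-q ^ i))`, its vanishing says that the
trace is `a`. -/
noncomputable def normOneTracePoly {R : Type*} [CommRing R] (q g : ℕ) (a : R) : R[X] :=
  ∑ i ∈ range g, (X ^ (q ^ (g - 1) + q ^ i) + X ^ (q ^ (g - 1) - q ^ i)) - C a * X ^ q ^ (g - 1)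

section NormOneTracePoly

variable {R : Type*} [CommRing R] {q : ℕ}

theorem natDegree_normOneTracePoly_le (hq : 0 < q) (g : ℕ) (a : R) :
    (normOneTracePoly q g a).natDegree ≤ 2 * q ^ (g - 1) := by
  have hX {m : ℕ} (hm : m ≤ 2 * q ^ (g - 1)) : (X ^ m : R[X]).natDegree ≤ 2 * q ^ (g - 1) :=
    (natDegree_X_pow_le m).trans hm
  refine (natDegree_sub_le_of_le (natDegree_sum_le_of_forall_le _ _ fun i hi =>
    natDegree_add_le_of_degree_le (hX ?_) (hX (by lia)))
    ((natDegree_C_mul_le _ _).trans (hX (by lia)))).trans (max_self _).le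
  have : q ^ i ≤ q ^ (g - 1) := Nat.pow_le_pow_right hq (by have := mem_range.1 hi; lia)
  lia

theorem coeff_normOneTracePoly (hq : 1 < q) (hg : g ≠ 0) (a : R) :
    (normOneTracePoly q g a).coeff (2 * q ^ (g - 1)) = 1 := by
  have hpos (i) : 0 < q ^ i := Nat.pow_pos (by lia)
  have hne (i) : 2 * q ^ (g - 1) ≠ q ^ (g - 1) - q ^ i := by have := hpos (g - 1); lia
  have hmid : 2 * q ^ (g - 1) ≠ q ^ (g - 1) := by have := hpos (g - 1); lia
  have htop (i) : 2 * q ^ (g - 1) = q ^ (g - 1) + q ^ i ↔ g - 1 = i := by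
    rw [two_mul, Nat.add_left_cancel_iff, Nat.pow_right_inj hq]
  simp only [normOneTracePoly, coeff_sub, finsetSum_coeff, coeff_add, coeff_X_pow, coeff_C_mul,
    hne, hmid, htop, if_false, add_zero, mul_zero, sub_zero, sum_ite_eq, mem_range]
  exact if_pos (by lia)

end NormOneTracePoly

theorem isRoot_normOneTracePoly (hK : finrank F K = 2 * g) {u : K}
    (hu : u ^ (Nat.card F ^ g + 1) = 1) :
    (normOneTracePoly (Nat.card F) g (algebraMap F K (Algebra.trace F K u))).IsRoot u := by
  set q := Nat.card F
  have hterm : ∀ i ∈ range g, u ^ (q ^ (g - 1) + q ^ i) + u ^ (q ^ (g - 1) - q ^ i) =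
      (u ^ q ^ i + u ^ q ^ (g + i)) * u ^ q ^ (g - 1) := by
    intro i hi
    have hle : q ^ i ≤ q ^ (g - 1) :=
      Nat.pow_le_pow_right Finite.card_pos (by have := mem_range.1 hi; lia)
    have hinv : u ^ q ^ (g + i) * u ^ q ^ i = 1 := by
      rw [pow_add, pow_mul, ← mul_pow, ← pow_succ, hu, one_pow]
    have hsub : u ^ (q ^ (g - 1) - q ^ i) * u ^ q ^ i = u ^ q ^ (g - 1) := by
      rw [← pow_add, Nat.sub_add_cancel hle]
    rw [pow_add]
    linear_combination -u ^ (q ^ (g - 1) - q ^ i) * hinv + u ^ q ^ (g + i) * hsub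
  have htrace : ∑ i ∈ range g, (u ^ q ^ i + u ^ q ^ (g + i)) =
      algebraMap F K (Algebra.trace F K u) := by
    rw [FiniteField.algebraMap_trace_eq_sum_pow, hK, two_mul, sum_range_add, sum_add_distrib]
  simp only [normOneTracePoly, IsRoot, eval_sub, eval_finsetSum, eval_add, eval_pow, eval_X,
    eval_mul, eval_C]
  rw [sum_congr rfl hterm, ← sum_mul, htrace, sub_self]

theorem card_le_of_trace_eq (hσ : ∀ x, σ x = x ^ Nat.card F ^ g) (hg : g ≠ 0)
    (hK : finrank F K = 2 * g) {t : F} {U : Finset (normOneSubgroup σ)}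
    (hU : ∀ u ∈ U, Algebra.trace F K ((u : Kˣ) : K) = t) : #U ≤ 2 * Nat.card F ^ (g - 1) := by
  have hcoeff := coeff_normOneTracePoly Finite.one_lt_card (q := Nat.card F) hg (algebraMap F K t)
  have hne : normOneTracePoly (Nat.card F) g (algebraMap F K t) ≠ 0 :=
    fun h => by simp [h] at hcoeff
  refine (card_le_natDegree_of_isRoot hne
    (Units.val_injective.comp Subtype.val_injective).injOn fun u hu => ?_).trans
    (natDegree_normOneTracePoly_le Finite.card_pos g _)
  rw [← hU u hu]
  refine isRoot_normOneTracePoly hK ?_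
  exact congrArg Units.val ((mem_normOneSubgroup_iff_pow_eq_one hσ).1 u.2)

theorem exists_finset_adjoin_eq_top_and_trace_notMem (hσ : ∀ x, σ x = x ^ Nat.card F ^ g)
    (hg : g ≠ 0) (hK : finrank F K = 2 * g) {T : Finset F} (hT : 2 * g + 4 * #T + 3 ≤ Nat.card F) :
    ∃ U : Finset (normOneSubgroup σ), (∀ u ∈ U, F⟮((u : Kˣ) : K)⟯ = ⊤ ∧
      Algebra.trace F K ((u : Kˣ) : K) ∉ T) ∧ Nat.card (normOneSubgroup σ) ≤ 2 * #U := by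
  classical
  have := Fintype.ofFinite (normOneSubgroup σ)
  set tr : normOneSubgroup σ → F := fun u => Algebra.trace F K ((u : Kˣ) : K)
  set Y : Finset (normOneSubgroup σ) := {u | F⟮((u : Kˣ) : K)⟯ ≠ ⊤}
  set Z : Finset (normOneSubgroup σ) := {u | tr u ∈ T}
  refine ⟨(Y ∪ Z)ᶜ, fun u hu => by simpa [Y, Z, tr] using hu, ?_⟩
  set Q := Nat.card F ^ (g - 1)
  have hY : #Y ≤ 2 + g * Q := card_le_of_adjoin_ne_top hσ hK fun u hu => (mem_filter.1 hu).2
  have hZ : #Z ≤ 2 * Q * #T := by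
    refine card_le_mul_card_image_of_maps_to (f := tr) (fun u hu => (mem_filter.1 hu).2) _
      fun t _ => ?_
    exact card_le_of_trace_eq hσ hg hK fun u hu => (mem_filter.1 hu).2
  have hcard : Nat.card (normOneSubgroup σ) = Q * Nat.card F + 1 := by
    rw [card_normOneSubgroup hσ (by rw [natCard_eq_pow_finrank (K := F), hK, mul_comm, pow_mul]),
      ← pow_succ, Nat.sub_add_cancel (Nat.one_le_iff_ne_zero.2 hg)]
  have hQ : 0 < Q := Nat.pow_pos Finite.card_pos
  have hbad : 2 * #(Y ∪ Z) ≤ Nat.card (normOneSubgroup σ) := by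
    rw [hcard]
    nlinarith [card_union_le Y Z, Nat.mul_le_mul_left Q hT]
  rw [card_compl, ← Nat.card_eq_fintype_card]
  lia

end NormOneCounting

section SymplecticDensity

open Module Finset

theorem card_symplecticGroup_le_of_irreducible_charpoly_mem {F l : Type*} [Field F] [Finite F]
    [Fintype l] [DecidableEq l] [Nonempty l] [Fintype (symplecticGroup l F)] (h2 : (2 : F) ≠ 0)
    {T : Finset F} (hT : 2 * Fintype.card l + 4 * #T + 3 ≤ Nat.card F)
    {A : Finset (symplecticGroup l F)}
    (hA : ∀ M : symplecticGroup l F, Irreducible (M : Matrix (l ⊕ l) (l ⊕ l) F).charpoly →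
      (M : Matrix (l ⊕ l) (l ⊕ l) F).trace ∉ T → M ∈ A) :
    Fintype.card (symplecticGroup l F) ≤ 4 * Fintype.card l * #A := by
  classical
  set g := Fintype.card l
  have hg : g ≠ 0 := Fintype.card_ne_zero
  obtain ⟨p, _⟩ := CharP.exists F
  have : Fact p.Prime := ⟨CharP.char_is_prime F p⟩
  have : NeZero (2 * g) := ⟨mul_ne_zero two_ne_zero hg⟩
  let K := FiniteField.Extension F p (2 * g)
  have hK : finrank F K = 2 * g := FiniteField.finrank_extension F p (2 * g)
  let σ : K ≃ₐ[F] K := FiniteField.Extension.frob F p (2 * g) ^ g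
  have hσ (x : K) : σ x = x ^ Nat.card F ^ g := FiniteField.Extension.frob_iterate_apply F p _ g
  have hσ2 : orderOf σ = 2 := by
    rw [orderOf_pow_of_dvd hg] <;> rw [FiniteField.Extension.frob,
      FiniteField.orderOf_frobeniusAlgEquivOfAlgebraic, hK]
    · exact Nat.mul_div_cancel _ (Nat.pos_of_ne_zero hg)
    · exact dvd_mul_left g 2
  obtain ⟨c, hc, b, hb⟩ := exists_basis_toMatrix_twistedTraceForm_eq_J (l := l) h2 hσ2 hK
  obtain ⟨U, hU, hUcard⟩ := exists_finset_adjoin_eq_top_and_trace_notMem hσ hg hK hT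
  have hconj : ∀ u ∈ U, ∀ M, IsConj (symplecticTorus hb hc u) M → M ∈ A := by
    intro u hu M hM
    obtain ⟨huK, htr⟩ := hU u hu
    have hcharpoly := charpoly_eq_of_isConj hM
    refine hA M ?_ ?_
    · rw [← hcharpoly, symplecticTorus_coe, charpoly_leftMulMatrix_eq_minpoly b huK]
      exact minpoly.irreducible (IsIntegral.of_finite F _)
    · rwa [trace_eq_neg_charpoly_nextCoeff, ← hcharpoly, ← trace_eq_neg_charpoly_nextCoeff,
        symplecticTorus_coe, ← Algebra.trace_eq_matrix_trace b]
  have hcount := card_mul_card_le_of_isConj_mem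
    (fun u hu => card_centralizer_symplecticTorus_le hb hc (hU u hu).1)
    (card_isConj_symplecticTorus_le hb hc fun u hu => (hU u hu).1) hconj
  refine Nat.le_of_mul_le_mul_right ?_ (Nat.card_pos (α := normOneSubgroup σ))
  nlinarith

end SymplecticDensity

/-! ### The Casson–Bleiler conditions -/

section CassonBleiler

/-- The Casson–Bleiler conditions on the characteristic polynomial `q` of the action of a surface
mapping class on homology, which together imply that the class is pseudo-Anosov. -/
def IsCassonBleiler (q : ℚ[X]) : Prop :=
  Irreducible q ∧ (∀ m : ℕ, q ≠ cyclotomic m ℚ) ∧ ¬∃ k : ℕ, 1 < k ∧ ∃ h : ℚ[X], q = h.comp (X ^ k)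

-- The roots are roots of unity, and the coefficient in question is minus their sum.
theorem abs_nextCoeff_cyclotomic_le (m : ℕ) :
    |(cyclotomic m ℤ).nextCoeff| ≤ (cyclotomic m ℤ).natDegree := by
  have hroots : ∀ z ∈ (cyclotomic m ℂ).roots, ‖z‖ ≤ 1 := fun z hz => by
    obtain rfl | hm := eq_or_ne m 0
    · simp at hz
    have : NeZero (m : ℂ) := ⟨Nat.cast_ne_zero.mpr hm⟩
    exact ((isRoot_cyclotomic_iff.mp (isRoot_of_mem_roots hz)).norm'_eq_one hm).le
  have hnext : ((cyclotomic m ℤ).nextCoeff : ℂ) = -(cyclotomic m ℂ).roots.sum := by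
    rw [← (IsAlgClosed.splits _).nextCoeff_eq_neg_sum_roots_of_monic (cyclotomic.monic m ℂ),
      ← map_cyclotomic m (Int.castRingHom ℂ), nextCoeff_map Int.cast_injective, eq_intCast]
  have hcard : (cyclotomic m ℂ).roots.card = (cyclotomic m ℤ).natDegree := by
    rw [← (IsAlgClosed.splits _).natDegree_eq_card_roots, natDegree_cyclotomic,
      natDegree_cyclotomic]
  have hle : ‖((cyclotomic m ℤ).nextCoeff : ℂ)‖ ≤ (cyclotomic m ℤ).natDegree := by
    rw [hnext, norm_neg, ← hcard]
    refine (norm_multiset_sum_le _).trans ?_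
    refine (Multiset.sum_le_card_nsmul _ 1 ?_).trans_eq (by simp)
    rintro _ hx
    obtain ⟨z, hz, rfl⟩ := Multiset.mem_map.mp hx
    exact hroots z hz
  rw [Complex.norm_intCast] at hle
  exact_mod_cast hle

theorem nextCoeff_expand {R : Type*} [CommSemiring R] {k : ℕ} (hk : 1 < k) (p : R[X]) :
    (expand R k p).nextCoeff = 0 := by
  obtain h | h := (expand R k p).natDegree.eq_zero_or_pos
  · rw [nextCoeff, if_pos h]
  have hnot : ¬k ∣ (expand R k p).natDegree - 1 := fun hdvd =>
    hk.ne' <| Nat.dvd_one.mp <|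
      (Nat.dvd_sub_iff_right h (natDegree_expand k p ▸ dvd_mul_left k _)).mp hdvd
  rw [nextCoeff_of_natDegree_pos h, coeff_expand (by omega), if_neg hnot]

-- Each of the two excluded forms of the characteristic polynomial bounds its second coefficient,
-- which is minus the trace.
theorem isCassonBleiler_charpoly_of_irreducible_map {R n : Type*} [CommRing R] [IsDomain R]
    [Fintype n] [DecidableEq n] (φ : ℤ →+* R) {M : Matrix n n ℤ}
    (hirr : Irreducible (M.map φ).charpoly) (htr : Fintype.card n < |M.trace|) :
    IsCassonBleiler (M.charpoly.map (algebraMap ℤ ℚ)) := by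
  have hnext : M.charpoly.nextCoeff = -M.trace := by
    rw [trace_eq_neg_charpoly_nextCoeff, neg_neg]
  have hinj : Function.Injective (algebraMap ℤ ℚ) := Int.cast_injective
  refine ⟨?_, fun m hm => ?_, ?_⟩
  · rw [charpoly_map] at hirr
    exact M.charpoly_monic.irreducible_iff_irreducible_map_fraction_map.mp
      (M.charpoly_monic.irreducible_of_irreducible_map φ _ hirr)
  · have hcyc : M.charpoly = cyclotomic m ℤ :=
      map_injective _ hinj (hm.trans (map_cyclotomic m _).symm)
    have := abs_nextCoeff_cyclotomic_le m
    rw [← hcyc, hnext, abs_neg, M.charpoly_natDegree_eq_dim] at this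
    exact htr.not_ge this
  · rintro ⟨k, hk, h, hh⟩
    have hzero : (M.charpoly.map (algebraMap ℤ ℚ)).nextCoeff = 0 := hh ▸ nextCoeff_expand hk h
    rw [nextCoeff_map hinj, map_eq_zero_iff _ hinj, hnext, neg_eq_zero] at hzero
    rw [hzero, abs_zero] at htr
    exact htr.not_ge (Int.natCast_nonneg _)

end CassonBleiler

section ReductionModPrimes

theorem infinite_setOf_prime_ge (N : ℕ) : {p : ℕ | p.Prime ∧ N ≤ p}.Infinite :=
  (Nat.infinite_setOfPred_prime.sdiff (Set.finite_lt_nat N)).mono fun _ hp => ⟨hp.1, not_lt.mp hp.2⟩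

theorem natCast_zmod_ne_zero {k p : ℕ} (hk : 0 < k) (hkp : k < p) : (k : ZMod p) ≠ 0 := fun h =>
  Nat.not_dvd_of_pos_of_lt hk hkp ((ZMod.natCast_eq_zero_iff k p).mp h)

variable (l : Type*) [Fintype l] [DecidableEq l]

theorem isPerfect_symplecticGroup_zmod {p : ℕ} [Fact p.Prime] (hp : 3 < p) :
    Group.IsPerfect (symplecticGroup l (ZMod p)) := by
  have h2 : ((2 : ℕ) : ZMod p) ≠ 0 := natCast_zmod_ne_zero two_pos (by omega)
  have h3 : ((2 : ℕ) : ZMod p) ^ 2 - 1 = (3 : ℕ) := by norm_num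
  exact isPerfect_symplecticGroup (Units.mk0 _ h2) (h3 ▸ natCast_zmod_ne_zero three_pos hp)

/-- The symplectic matrices modulo `p` whose characteristic polynomial is irreducible and whose
trace is not the residue of an integer bounded in absolute value by the size `2 * Fintype.card l`: a
condition modulo `p` under which every integral lift satisfies the Casson–Bleiler conditions. -/
noncomputable def cassonBleilerResidues (p : ℕ) [Fintype (symplecticGroup l (ZMod p))] :
    Finset (symplecticGroup l (ZMod p)) := by
  classical exact {M | Irreducible M.1.charpoly ∧
    M.1.trace ∉ (Finset.Icc (-2 * Fintype.card l : ℤ) (2 * Fintype.card l)).image (↑)}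

variable {l}

theorem isCassonBleiler_of_symplecticMap_mem {p : ℕ} [Fact p.Prime]
    [Fintype (symplecticGroup l (ZMod p))] {M : symplecticGroup l ℤ}
    (hM : symplecticMap l (Int.castRingHom (ZMod p)) M ∈ cassonBleilerResidues l p) :
    IsCassonBleiler (M.1.charpoly.map (algebraMap ℤ ℚ)) := by
  classical
  simp only [cassonBleilerResidues, Finset.mem_filter_univ] at hM
  refine isCassonBleiler_charpoly_of_irreducible_map (Int.castRingHom (ZMod p)) hM.1 ?_
  by_contra! htr
  rw [Fintype.card_sum, Nat.cast_add, ← two_mul, abs_le, ← neg_mul] at htr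
  refine hM.2 (Finset.mem_image.mpr ⟨M.1.trace, Finset.mem_Icc.mpr htr, ?_⟩)
  exact AddMonoidHom.map_trace (Int.castRingHom (ZMod p)) M.1

theorem card_symplecticGroup_le_card_cassonBleilerResidues [Nonempty l] {p : ℕ} [Fact p.Prime]
    (hp : 18 * Fintype.card l + 7 ≤ p) [Fintype (symplecticGroup l (ZMod p))] :
    Fintype.card (symplecticGroup l (ZMod p)) ≤
      4 * Fintype.card l * (cassonBleilerResidues l p).card := by
  classical
  have h2 : ((2 : ℕ) : ZMod p) ≠ 0 := natCast_zmod_ne_zero two_pos (by omega)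
  refine card_symplecticGroup_le_of_irreducible_charpoly_mem (mod_cast h2) ?_
    fun M hirr htr => (Finset.mem_filter_univ M).mpr ⟨hirr, htr⟩
  have hcard := Finset.card_image_le (f := ((↑) : ℤ → ZMod p))
    (s := Finset.Icc (-2 * Fintype.card l : ℤ) (2 * Fintype.card l))
  rw [Int.card_Icc] at hcard
  rw [Nat.card_zmod]
  omega

theorem tendsto_wordAverage_isCassonBleiler [Nonempty l] {ι : Type*} [Fintype ι] [Nonempty ι]
    {f : ι → symplecticGroup l ℤ} (hf : Subgroup.closure (Set.range f) = ⊤) :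
    Tendsto (fun n => wordAverage f n
      ({M | IsCassonBleiler (M.1.charpoly.map (algebraMap ℤ ℚ))}.indicator 1) 1) atTop (𝓝 1) := by
  let κ := {p : ℕ | p.Prime ∧ 18 * Fintype.card l + 7 ≤ p}
  have : Infinite κ := (infinite_setOf_prime_ge _).to_subtype
  have hprime : ∀ p : κ, Fact (p : ℕ).Prime := fun p => ⟨p.2.1⟩
  have : ∀ p : κ, Fintype (symplecticGroup l (ZMod p)) := fun p => Fintype.ofFinite _
  have : ∀ p : κ, Group.IsPerfect (symplecticGroup l (ZMod p)) := fun p =>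
    isPerfect_symplecticGroup_zmod l (by have := p.2.2; omega)
  have hl : (0 : ℝ) < 4 * Fintype.card l := by
    have := Fintype.card_pos (α := l)
    positivity
  refine tendsto_wordAverage_indicator_one hf
    (φ := fun p : κ => symplecticMap l (Int.castRingHom (ZMod p)))
    (A := fun p => cassonBleilerResidues l p) (δ := (4 * Fintype.card l : ℝ)⁻¹)
    (fun s => pi_symplecticMap_surjective (pi_intCast_zmod_surjective ?_))
    (inv_pos.mpr hl) (fun p => ?_) fun p M hM => isCassonBleiler_of_symplecticMap_mem hM
  · exact fun p q hpq => (Nat.coprime_primes p.1.2.1 q.1.2.1).mpr fun h =>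
      hpq (Subtype.ext (Subtype.ext h))
  · rw [inv_mul_le_iff₀ hl]
    exact_mod_cast card_symplecticGroup_le_card_cassonBleilerResidues p.2.2

end ReductionModPrimes

open scoped Classical in
/-- the proportion of words of length `N` in a finite generating
set of `Sp(2g, ℤ)` whose product satisfies the Casson–Bleiler conditions
(irreducible, non-cyclotomic characteristic polynomial, not of the form
`h(X^k)` with `k > 1`) tends to `1` as `N → ∞`. -/
theorem stmt14 (g : ℕ) (hg : 1 ≤ g)
    (S : Finset (Matrix.symplecticGroup (Fin g) ℤ))
    (hS : Subgroup.closure (S : Set (Matrix.symplecticGroup (Fin g) ℤ)) = ⊤) :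
    Filter.Tendsto (fun N : ℕ =>
        ((Finset.univ.filter (fun w : Fin N → {x // x ∈ S} =>
            let q : Polynomial ℚ :=
              (Matrix.charpoly
                  (((List.ofFn fun i => (w i : Matrix.symplecticGroup (Fin g) ℤ)).prod :
                      Matrix.symplecticGroup (Fin g) ℤ) :
                    Matrix (Fin g ⊕ Fin g) (Fin g ⊕ Fin g) ℤ)).map (algebraMap ℤ ℚ)
            Irreducible q ∧
              (∀ m : ℕ, q ≠ Polynomial.cyclotomic m ℚ) ∧
              ¬ ∃ k : ℕ, 1 < k ∧ ∃ h : Polynomial ℚ,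
                  q = h.comp (Polynomial.X ^ k))).card : ℝ) /
        ((S.card : ℝ) ^ N))
      Filter.atTop (nhds 1) := by
  have : Nonempty (Fin g) := ⟨⟨0, hg⟩⟩
  have hne : S.Nonempty := by
    rw [Finset.nonempty_iff_ne_empty]
    rintro rfl
    have := nontrivial_symplecticGroup (l := Fin g) (R := ℤ)
    rw [Finset.coe_empty, Subgroup.closure_empty] at hS
    exact bot_ne_top hS
  have := hne.to_subtype
  have hf : Subgroup.closure (Set.range ((↑) : S → Matrix.symplecticGroup (Fin g) ℤ)) = ⊤ := by
    rwa [Subtype.range_coe]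
  refine (tendsto_wordAverage_isCassonBleiler hf).congr fun N => ?_
  rw [wordAverage_indicator_one, Fintype.card_coe]
  congr!
end

section
/- Fix d ≥ 2, a natural number k with k < d, and an integer a, with a ≠ 0 in case k = 0. For N ≥ |a|, let P_N be the (finite, nonempty) set of monic polynomials f ∈ ℤ[X] with natDegree f = d, f.coeff k = a, and |f.coeff i| ≤ N for all i < d, and let G_N ⊆ P_N be the subset of polynomials with full symmetric Galois group over ℚ. Then |G_N| / |P_N| tends to 1 as N tends to infinity. -/
/-!
Reduce `f`, of degree `d`, modulo primes. If `f mod p` is separable, a Frobenius at `p` is a Galois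
element whose cycle type on the roots of `f` is the factorization type of `f mod p`. Three kinds of
primes suffice. If `f mod p` has no root, then `f` has no rational root, so no root is fixed by the
whole Galois group. If `f mod p` has type `(d - 1, 1)`, the group contains a `(d - 1)`-cycle, and
with the first kind this makes it doubly transitive. If `f mod p` has type `(2, 1, …, 1)`, the group
contains a transposition, and a primitive group containing one is the full symmetric group.

Each of these three events has, among the polynomials over `𝔽_p` with one coefficient prescribed, a
proportion bounded below independently of `p`. For the factorization types one starts from an
irreducible factor with unprescribed coefficients and a product of linear factors; for the absence
of roots one uses that the average number of roots is at most one, while a positive proportion has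
at least two. By the Chinese remainder theorem the events are independent for different primes, so
almost every `f` realizes each of them for at least one prime.
-/

open Filter Finset Polynomial NumberField Topology

section PermutationGroups

open MulAction

theorem isMultiplyPretransitive_two_of_pow_smul {G Ω : Type*} [Group G] [MulAction G Ω]
    {σ τ : G} {w : Ω} (hσ : σ • w = w)
    (hpow : ∀ x y, x ≠ w → y ≠ w → ∃ n : ℕ, σ ^ n • x = y) (hτ : τ • w ≠ w) :
    IsMultiplyPretransitive G Ω 2 := by
  have hpowfix (n : ℕ) : σ ^ n • w = w := by
    rw [← smul_iterate_apply, Function.iterate_fixed hσ]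
  have move (x : Ω) : ∃ g : G, g • x = w := by
    by_cases hx : x = w
    · exact ⟨1, by rw [one_smul, hx]⟩
    · obtain ⟨n, hn⟩ := hpow x (τ • w) hx hτ
      exact ⟨τ⁻¹ * σ ^ n, by rw [mul_smul, hn, inv_smul_smul]⟩
  refine is_two_pretransitive_iff.2 fun {a b c d} hab hcd ↦ ?_
  obtain ⟨u, hu⟩ := move a
  obtain ⟨v, hv⟩ := move c
  obtain ⟨n, hn⟩ := hpow (u • b) (v • d)
    (fun h ↦ hab (MulAction.injective u (hu.trans h.symm)))
    (fun h ↦ hcd (MulAction.injective v (hv.trans h.symm)))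
  refine ⟨v⁻¹ * σ ^ n * u, ?_, ?_⟩
  · rw [mul_smul, hu, mul_smul, hpowfix, inv_smul_eq_iff, hv]
  · rw [mul_smul, mul_smul, hn, inv_smul_smul]

theorem subgroup_eq_top_of_pow_apply {Ω : Type*} [Finite Ω] [DecidableEq Ω]
    {G : Subgroup (Equiv.Perm Ω)}
    {σ τ s : Equiv.Perm Ω} (hσ : σ ∈ G) (hτ : τ ∈ G) (hs : s ∈ G) {w : Ω} (hσw : σ w = w)
    (hpow : ∀ x y, x ≠ w → y ≠ w → ∃ n : ℕ, (σ ^ n) x = y) (hτw : τ w ≠ w) (hswap : s.IsSwap) :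
    G = ⊤ :=
  have : IsMultiplyPretransitive G Ω 2 :=
    isMultiplyPretransitive_two_of_pow_smul (σ := (⟨σ, hσ⟩ : G)) (τ := ⟨τ, hτ⟩) hσw hpow hτw
  Equiv.Perm.subgroup_eq_top_of_isPreprimitive_of_isSwap_mem
    (isPreprimitive_of_is_two_pretransitive this) s hswap hs

end PermutationGroups

/-- `HasFactorType f m` says that `f` has factorization type `(m, 1, …, 1)`: it is an irreducible
polynomial of degree `m` times a product of linear factors. The linear factors may repeat. -/
def HasFactorType {F : Type*} [Field F] (f : F[X]) (m : ℕ) : Prop :=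
  ∃ g h : F[X], Irreducible g ∧ g.natDegree = m ∧ h.Splits ∧ f = g * h

/-- The Frobenius permutation `σ` of a set `Ω` which `ρ` identifies with the roots of `f` in an
extension `κ` of the finite field `k`, that is, the permutation given on roots by
`x ↦ x ^ card k`. Here `Ω` is meant to be the root set of a lift of `f` to characteristic zero. -/
structure IsFrobeniusReduction {k κ Ω : Type*} [Field k] [Fintype k] [Field κ] [Algebra k κ]
    (f : k[X]) (ρ : Ω → κ) (σ : Equiv.Perm Ω) : Prop where
  splits : (f.map (algebraMap k κ)).Splits
  injective : Function.Injective ρ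
  range_eq : Set.range ρ = f.rootSet κ
  map_apply (x : Ω) : ρ (σ x) = ρ x ^ Fintype.card k

theorem mem_range_algebraMap_of_pow_card_eq {k κ : Type*} [Field k] [Fintype k] [Field κ]
    [Finite κ] [Algebra k κ] {y : κ} (hy : y ^ Fintype.card k = y) :
    y ∈ (algebraMap k κ).range := by
  refine IntermediateField.mem_bot.1 ((IsGalois.mem_bot_iff_fixed y).2 fun φ ↦ ?_)
  obtain ⟨n, rfl⟩ := (FiniteField.bijective_frobeniusAlgEquivOfAlgebraic_pow k κ).2 φ
  rw [AlgEquiv.coe_pow]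
  exact Function.iterate_fixed hy _

namespace IsFrobeniusReduction

variable {k κ Ω : Type*} [Field k] [Fintype k] [Field κ] [Algebra k κ] {f : k[X]} {ρ : Ω → κ}
  {σ : Equiv.Perm Ω}

theorem aeval_eq_zero (h : IsFrobeniusReduction f ρ σ) (x : Ω) : aeval (ρ x) f = 0 :=
  (mem_rootSet.1 (h.range_eq ▸ Set.mem_range_self x)).2

theorem exists_eq_of_aeval_eq_zero (h : IsFrobeniusReduction f ρ σ) (hf : f ≠ 0) {y : κ}
    (hy : aeval y f = 0) : ∃ x, ρ x = y :=
  Set.mem_range.1 (h.range_eq.symm ▸ mem_rootSet.2 ⟨hf, hy⟩)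

theorem map_pow_apply (h : IsFrobeniusReduction f ρ σ) (n : ℕ) (x : Ω) :
    ρ ((σ ^ n) x) = ρ x ^ Fintype.card k ^ n := by
  induction n with
  | zero => simp
  | succ n ih => rw [pow_succ', Equiv.Perm.mul_apply, h.map_apply, ih, ← pow_mul, pow_succ]

theorem apply_eq_self_of_mem_range (h : IsFrobeniusReduction f ρ σ) {x : Ω}
    (hx : ρ x ∈ (algebraMap k κ).range) : σ x = x := by
  obtain ⟨s, hs⟩ := hx
  apply h.injective
  rw [h.map_apply, ← hs, ← map_pow, FiniteField.pow_card]

theorem natCard_eq (h : IsFrobeniusReduction f ρ σ) (hsep : f.Separable) :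
    Nat.card Ω = f.natDegree := by
  rw [← card_rootSet_eq_natDegree hsep h.splits, ← Nat.card_eq_fintype_card, ← h.range_eq,
    Nat.card_range_of_injective h.injective]

variable [Finite κ]

theorem mem_range_of_apply_eq_self (h : IsFrobeniusReduction f ρ σ) {x : Ω} (hx : σ x = x) :
    ρ x ∈ (algebraMap k κ).range :=
  mem_range_algebraMap_of_pow_card_eq (by rw [← h.map_apply, hx])

theorem exists_pow_apply_eq (h : IsFrobeniusReduction f ρ σ) {g : k[X]} (hg : Irreducible g)
    {x y : Ω} (hx : aeval (ρ x) g = 0) (hy : aeval (ρ y) g = 0) : ∃ n : ℕ, (σ ^ n) x = y := by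
  have hconj : IsConjRoot k (ρ y) (ρ x) :=
    (minpoly.eq_of_irreducible hg hy).symm.trans (minpoly.eq_of_irreducible hg hx)
  obtain ⟨φ, hφ⟩ := hconj.exists_algEquiv
  obtain ⟨n, rfl⟩ := (FiniteField.bijective_frobeniusAlgEquivOfAlgebraic_pow k κ).2 φ
  refine ⟨n, h.injective ?_⟩
  rw [h.map_pow_apply, ← hφ, AlgEquiv.coe_pow,
    FiniteField.coe_frobeniusAlgEquivOfAlgebraic_iterate]

theorem exists_fixed_and_pow_apply_eq (h : IsFrobeniusReduction f ρ σ) {m : ℕ}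
    (hm : f.natDegree = m + 1) (htype : HasFactorType f m) :
    ∃ w, σ w = w ∧ ∀ x y, x ≠ w → y ≠ w → ∃ n : ℕ, (σ ^ n) x = y := by
  have hf : f ≠ 0 := by rintro rfl; simp at hm
  obtain ⟨g, l, hg, hgm, hl, rfl⟩ := htype
  have hl1 : l.natDegree = 1 := by
    rw [natDegree_mul hg.ne_zero (right_ne_zero_of_mul hf)] at hm
    lia
  have hl_irr : Irreducible l := irreducible_of_degree_eq_one (degree_eq_iff_natDegree_eq_of_pos
    one_pos |>.2 hl1)
  obtain ⟨s, hs⟩ := hl.exists_eval_eq_zero (by rw [degree_eq_natDegree hl_irr.ne_zero, hl1]; simp)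
  have hs' : aeval (algebraMap k κ s) l = 0 := by rw [aeval_algebraMap_apply, coe_aeval_eq_eval, hs,
    map_zero]
  obtain ⟨w, hw⟩ := h.exists_eq_of_aeval_eq_zero (y := algebraMap k κ s) hf (by simp [hs'])
  have hσw : σ w = w := h.apply_eq_self_of_mem_range ⟨s, hw.symm⟩
  have root_g (x : Ω) (hx : x ≠ w) : aeval (ρ x) g = 0 := by
    refine (mul_eq_zero.1 (map_mul (aeval (ρ x)) g l ▸ h.aeval_eq_zero x)).resolve_right
      fun hxl ↦ hx ?_
    obtain ⟨n, hn⟩ := h.exists_pow_apply_eq hl_irr (hw ▸ hs') hxl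
    rw [← hn, ← Equiv.Perm.iterate_eq_pow, Function.iterate_fixed hσw]
  exact ⟨w, hσw, fun x y hx hy ↦ h.exists_pow_apply_eq hg (root_g x hx) (root_g y hy)⟩

theorem isSwap [DecidableEq Ω] (h : IsFrobeniusReduction f ρ σ) (hf : f ≠ 0)
    (htype : HasFactorType f 2) : σ.IsSwap := by
  classical
  have := Finite.of_injective ρ h.injective
  have := Fintype.ofFinite Ω
  obtain ⟨g, l, hg, hg2, hl, rfl⟩ := htype
  have root_g (x : Ω) (hx : σ x ≠ x) : aeval (ρ x) g = 0 := by
    refine (mul_eq_zero.1 (map_mul (aeval (ρ x)) g l ▸ h.aeval_eq_zero x)).resolve_right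
      fun hxl ↦ hx (h.apply_eq_self_of_mem_range ?_)
    exact hl.mem_range_of_isRoot (right_ne_zero_of_mul hf) (by rwa [IsRoot, eval_map_algebraMap])
  have card_le : #σ.support ≤ 2 := by
    rw [← card_image_of_injective _ h.injective, ← hg2]
    refine (card_le_card (image_subset_iff.2 fun x hx ↦ ?_)).trans
      ((Multiset.toFinset_card_le _).trans
        ((card_roots' (g.map (algebraMap k κ))).trans_eq (natDegree_map _)))
    rw [Multiset.mem_toFinset, mem_roots (map_ne_zero hg.ne_zero), IsRoot, eval_map_algebraMap]
    exact root_g x (Equiv.Perm.mem_support.1 hx)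
  have hσ : σ ≠ 1 := by
    rintro rfl
    obtain ⟨y, hy⟩ := (h.splits.of_dvd (map_ne_zero hf) (Polynomial.map_dvd _ (dvd_mul_right g l))
      ).exists_eval_eq_zero (by rw [degree_map, degree_eq_natDegree hg.ne_zero, hg2]; simp)
    rw [eval_map_algebraMap] at hy
    obtain ⟨x, rfl⟩ := h.exists_eq_of_aeval_eq_zero hf (y := y) (by rw [map_mul, hy, zero_mul])
    obtain ⟨s, hs⟩ := h.mem_range_of_apply_eq_self (x := x) rfl
    rw [← hs, aeval_algebraMap_eq_zero_iff, coe_aeval_eq_eval] at hy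
    have hg1 : g.natDegree = 1 :=
      natDegree_eq_of_degree_eq_some (degree_eq_one_of_irreducible_of_root hg hy)
    lia
  exact Equiv.Perm.card_support_eq_two.1
    (card_le.antisymm (Equiv.Perm.two_le_card_support_of_ne_one hσ))

end IsFrobeniusReduction

section Frobenius

universe u

variable {E : Type u} [Field E]

theorem exists_residueField_frobenius (E : Type u) [Field E] [NumberField E] [IsGalois ℚ E]
    (p : ℕ) [hp : Fact p.Prime] :
    ∃ (κ : Type u) (_ : Field κ) (_ : Finite κ) (_ : Algebra (ZMod p) κ) (π : 𝓞 E →+* κ)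
      (σ : Gal(E/ℚ)), ∀ x : 𝓞 E, π (σ • x) = π x ^ p := by
  have hp0 : (p : ℤ) ≠ 0 := by exact_mod_cast hp.out.ne_zero
  let P : Ideal ℤ := Ideal.span {(p : ℤ)}
  have hP0 : P ≠ ⊥ := by simpa [P] using hp0
  have : P.IsMaximal :=
    ((Ideal.span_singleton_prime hp0).2 (Nat.prime_iff_prime_int.1 hp.out)).isMaximal hP0
  obtain ⟨Q, _, hQ⟩ := Ideal.exists_maximal_ideal_liesOver_of_isIntegral (S := 𝓞 E) P
  have : Finite (𝓞 E ⧸ Q) :=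
    Ideal.finiteQuotientOfFreeOfNeBot Q (Ideal.ne_bot_of_liesOver_of_ne_bot hP0 Q)
  obtain ⟨σ, hσ⟩ := IsArithFrobAt.exists_of_isInvariant ℤ Gal(E/ℚ) Q
  have hcard : Nat.card (ℤ ⧸ Q.under ℤ) = p := by
    rw [← hQ.over, Nat.card_congr (Int.quotientSpanNatEquivZMod p).toEquiv, Nat.card_zmod]
  have hpQ : (p : 𝓞 E ⧸ Q) = 0 := by
    have : (p : ℤ) ∈ Q.under ℤ := hQ.over ▸ Ideal.mem_span_singleton_self _
    exact_mod_cast Ideal.Quotient.eq_zero_iff_mem.2 (Ideal.mem_comap.1 this)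
  let _ : Field (𝓞 E ⧸ Q) := Ideal.Quotient.field Q
  have : CharP (𝓞 E ⧸ Q) p := (CharP.charP_iff_prime_eq_zero hp.out).2 hpQ
  exact ⟨𝓞 E ⧸ Q, inferInstance, inferInstance, ZMod.algebra _ p, Ideal.Quotient.mk Q, σ,
    fun x ↦ hcard ▸ hσ.mk_apply x⟩

theorem bijOn_rootSet_ringOfIntegers {f : ℤ[X]} (hf : f.Monic) :
    Set.BijOn (algebraMap (𝓞 E) E) (f.rootSet (𝓞 E)) (f.rootSet E) := by
  refine ⟨fun z hz ↦ ?_, RingOfIntegers.coe_injective.injOn, fun x hx ↦ ?_⟩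
  · rwa [hf.mem_rootSet, aeval_algebraMap_eq_zero_iff, ← hf.mem_rootSet]
  · rw [hf.mem_rootSet] at hx
    obtain ⟨z, rfl⟩ := (IsIntegralClosure.isIntegral_iff (A := 𝓞 E)).1 ⟨f, hf, hx⟩
    rw [aeval_algebraMap_eq_zero_iff] at hx
    exact ⟨z, hf.mem_rootSet.2 hx, rfl⟩

theorem splits_map_ringOfIntegers {f : ℤ[X]} (hf : f.Monic)
    (hs : (f.map (algebraMap ℤ E)).Splits) : (f.map (algebraMap ℤ (𝓞 E))).Splits := by
  have hmap : (f.map (algebraMap ℤ (𝓞 E))).map (algebraMap (𝓞 E) E) = f.map (algebraMap ℤ E) := by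
    rw [Polynomial.map_map, ← IsScalarTower.algebraMap_eq]
  refine Splits.of_splits_map_of_injective (i := algebraMap (𝓞 E) E)
    RingOfIntegers.coe_injective (hmap ▸ hs) fun x hx ↦ ?_
  obtain ⟨z, -, hz⟩ := (bijOn_rootSet_ringOfIntegers hf).surjOn <|
    (hf.mem_rootSet (S := E)).2 (by
      rw [← eval_map_algebraMap, ← hmap]
      exact isRoot_of_mem_roots hx)
  exact ⟨z, hz⟩

theorem bijOn_rootSet_of_separable {R A K : Type*} [CommRing R] [CommRing A] [IsDomain A]
    [Field K] [Algebra R A] [Algebra R K] {f : R[X]} (hs : (f.map (algebraMap R A)).Splits)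
    (hsep : (f.map (algebraMap R K)).Separable) (π : A →ₐ[R] K) :
    Set.BijOn π (f.rootSet A) (f.rootSet K) := by
  have himage := hs.image_rootSet_of_map_ne_zero π hsep.ne_zero
  have hmap : (f.map (algebraMap R A)).map (π : A →+* K) = f.map (algebraMap R K) := by
    rw [Polynomial.map_map, π.comp_algebraMap]
  have hroots := hs.roots_map_of_ne_zero (hmap ▸ hsep.ne_zero)
  have hnodup : ((f.map (algebraMap R A)).roots.map (π : A →+* K)).Nodup :=
    hroots ▸ hmap ▸ nodup_roots hsep
  refine ⟨himage ▸ Set.mapsTo_image _ _, fun x hx y hy hxy ↦ ?_, himage.symm.subset⟩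
  classical
  rw [rootSet_def, mem_coe, Multiset.mem_toFinset] at hx hy
  exact Multiset.inj_on_of_nodup_map hnodup x hx y hy hxy

theorem exists_isFrobeniusReduction [NumberField E] [IsGalois ℚ E] {f : ℤ[X]} (hf : f.Monic)
    [hs : Fact (((f.map (algebraMap ℤ ℚ)).map (algebraMap ℚ E)).Splits)] (p : ℕ) [Fact p.Prime]
    (hsep : (f.map (algebraMap ℤ (ZMod p))).Separable) :
    ∃ (κ : Type u) (_ : Field κ) (_ : Finite κ) (_ : Algebra (ZMod p) κ)
      (ρ : (f.map (algebraMap ℤ ℚ)).rootSet E → κ) (σ : (f.map (algebraMap ℤ ℚ)).Gal),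
      IsFrobeniusReduction (f.map (algebraMap ℤ (ZMod p))) ρ (Gal.galActionHom _ E σ) := by
  obtain ⟨κ, _, _, _, π, φ, hπ⟩ := exists_residueField_frobenius E p
  have hmapE : (f.map (algebraMap ℤ ℚ)).map (algebraMap ℚ E) = f.map (algebraMap ℤ E) := by
    rw [Polynomial.map_map, ← IsScalarTower.algebraMap_eq]
  have hmapκ : (f.map (algebraMap ℤ (ZMod p))).map (algebraMap (ZMod p) κ) =
      f.map (algebraMap ℤ κ) := by
    rw [Polynomial.map_map, ← IsScalarTower.algebraMap_eq]
  have hO : (f.map (algebraMap ℤ (𝓞 E))).Splits := splits_map_ringOfIntegers hf (hmapE ▸ hs.out)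
  have hE := bijOn_rootSet_ringOfIntegers (E := E) hf
  have hκ : Set.BijOn π (f.rootSet (𝓞 E)) (f.rootSet κ) :=
    bijOn_rootSet_of_separable hO (hmapκ ▸ hsep.map) π.toIntAlgHom
  have hqE : (f.map (algebraMap ℤ ℚ)).rootSet E = f.rootSet E := by
    rw [rootSet, aroots_map, ← rootSet]
  have hpκ : (f.map (algebraMap ℤ (ZMod p))).rootSet κ = f.rootSet κ := by
    classical rw [rootSet, aroots_map, ← rootSet]
  choose lift lift_mem hlift using fun x : (f.map (algebraMap ℤ ℚ)).rootSet E ↦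
    hE.surjOn (hqE.subset x.2)
  have lift_eq (x : (f.map (algebraMap ℤ ℚ)).rootSet E) (z : 𝓞 E) (h : z = (x : E)) : lift x = z :=
    RingOfIntegers.coe_injective ((hlift x).trans h.symm)
  refine ⟨κ, inferInstance, inferInstance, inferInstance, fun x ↦ π (lift x),
    Gal.restrict _ E φ, ?_, fun x y hxy ↦ Subtype.ext ?_, ?_, fun x ↦ ?_⟩
  · rw [hmapκ, ← Subsingleton.elim (π.comp (algebraMap ℤ (𝓞 E))) (algebraMap ℤ κ),
      ← Polynomial.map_map]
    exact hO.map π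
  · rw [← hlift x, ← hlift y, hκ.injOn (lift_mem x) (lift_mem y) hxy]
  · rw [hpκ, ← hκ.image_eq]
    refine Set.Subset.antisymm (Set.range_subset_iff.2 fun x ↦ ⟨_, lift_mem x, rfl⟩) ?_
    rintro _ ⟨z, hz, rfl⟩
    exact ⟨⟨z, hqE.ge (hE.mapsTo hz)⟩, congrArg π (lift_eq _ z rfl)⟩
  · rw [ZMod.card, ← hπ, lift_eq _ (φ • lift x)]
    rw [Gal.galActionHom_restrict, ← hlift x]
    exact algebraMap.coe_smul' φ (lift x) E

theorem exists_galActionHom_apply_ne [Algebra ℚ E] [FiniteDimensional ℚ E] [IsGalois ℚ E]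
    {f : ℤ[X]} (hf : f.Monic) [Fact (((f.map (algebraMap ℤ ℚ)).map (algebraMap ℚ E)).Splits)]
    {p : ℕ} (hp : ∀ x, ¬ (f.map (algebraMap ℤ (ZMod p))).IsRoot x)
    (w : (f.map (algebraMap ℤ ℚ)).rootSet E) :
    ∃ τ, Gal.galActionHom (f.map (algebraMap ℤ ℚ)) E τ w ≠ w := by
  by_contra! hfix
  have hw : (w : E) ∈ (⊥ : IntermediateField ℚ E) := by
    refine (IsGalois.mem_bot_iff_fixed _).2 fun φ ↦ ?_
    rw [← Gal.galActionHom_restrict, hfix]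
  obtain ⟨r, hr⟩ := IntermediateField.mem_bot.1 hw
  have hroot := (mem_rootSet.1 w.2).2
  rw [← hr, aeval_map_algebraMap, aeval_algebraMap_eq_zero_iff] at hroot
  obtain ⟨z, rfl⟩ := isInteger_of_is_root_of_monic hf hroot
  rw [aeval_algebraMap_eq_zero_iff, coe_aeval_eq_eval] at hroot
  exact hp z (IsRoot.map hroot)

end Frobenius

/-- The reductions modulo primes from which one recognizes that `f`, of degree `m + 1`, has the
full symmetric group as its Galois group: one has no root, one gives a Frobenius element that is a
cycle on all roots but one, and one gives a transposition. -/
structure HasSymmetricReductions (f : ℤ[X]) (m : ℕ) : Prop where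
  exists_no_root : ∃ p, ∃ _ : Fact p.Prime, ∀ x, ¬ (f.map (algebraMap ℤ (ZMod p))).IsRoot x
  exists_cycle : ∃ p, ∃ _ : Fact p.Prime, (f.map (algebraMap ℤ (ZMod p))).Separable ∧
    HasFactorType (f.map (algebraMap ℤ (ZMod p))) m
  exists_swap : ∃ p, ∃ _ : Fact p.Prime, (f.map (algebraMap ℤ (ZMod p))).Separable ∧
    HasFactorType (f.map (algebraMap ℤ (ZMod p))) 2

theorem HasSymmetricReductions.ncard_rootSet_and_bijective_galActionHom {E : Type*} [Field E]
    [alg : Algebra ℚ E] [FiniteDimensional ℚ E] [Normal ℚ E] {f : ℤ[X]} {m : ℕ} (hf : f.Monic)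
    (hm : f.natDegree = m + 1) (h : HasSymmetricReductions f m)
    [Fact (((f.map (algebraMap ℤ ℚ)).map (algebraMap ℚ E)).Splits)] :
    ((f.map (algebraMap ℤ ℚ)).rootSet E).ncard = m + 1 ∧
      Function.Bijective (Gal.galActionHom (f.map (algebraMap ℤ ℚ)) E) := by
  classical
  have : CharZero E := algebraRat.charZero E
  obtain rfl : alg = DivisionRing.toRatAlgebra := Subsingleton.elim _ _
  have : NumberField E := { }
  have : IsGalois ℚ E := ⟨⟩
  obtain ⟨p, _, hno⟩ := h.exists_no_root
  obtain ⟨p₁, _, hsep₁, htype₁⟩ := h.exists_cycle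
  obtain ⟨p₂, _, hsep₂, htype₂⟩ := h.exists_swap
  obtain ⟨_, _, _, _, _, σ, hσ⟩ := exists_isFrobeniusReduction (E := E) hf p₁ hsep₁
  obtain ⟨_, _, _, _, _, s, hs⟩ := exists_isFrobeniusReduction (E := E) hf p₂ hsep₂
  have hm₁ : (f.map (algebraMap ℤ (ZMod p₁))).natDegree = m + 1 := by rw [hf.natDegree_map, hm]
  obtain ⟨w, hσw, hpow⟩ := hσ.exists_fixed_and_pow_apply_eq hm₁ htype₁
  obtain ⟨τ, hτw⟩ := exists_galActionHom_apply_ne hf hno w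
  have hswap := hs.isSwap (hf.map _).ne_zero htype₂
  exact ⟨hm₁ ▸ hσ.natCard_eq hsep₁, Gal.galActionHom_injective _ _, MonoidHom.range_eq_top.1 <|
    subgroup_eq_top_of_pow_apply ⟨σ, rfl⟩ ⟨τ, rfl⟩ ⟨s, rfl⟩ hσw hpow hτw hswap⟩

theorem HasFactorType.separable {F : Type*} [Field F] [PerfectField F] {f : F[X]} {m : ℕ}
    (hf : HasFactorType f m) (h0 : f ≠ 0) (hsq : ∀ r, ¬ (X - C r) ^ 2 ∣ f) : f.Separable := by
  obtain ⟨g, h, hg, -, hh, rfl⟩ := hf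
  rw [PerfectField.separable_iff_squarefree, squarefree_iff_irreducible_sq_not_dvd_of_ne_zero h0]
  intro x hx hxx
  by_cases hxh : x ∣ h
  · have hxs : x.Splits := hh.of_dvd (right_ne_zero_of_mul h0) hxh
    obtain ⟨r, hr⟩ := hxs.exists_eval_eq_zero hx.degree_pos.ne'
    refine hsq r (dvd_trans ?_ hxx)
    rw [sq]
    exact mul_dvd_mul (dvd_iff_isRoot.2 hr) (dvd_iff_isRoot.2 hr)
  · have hcop : IsCoprime x h := hx.coprime_iff_not_dvd.2 hxh
    exact hx.not_isUnit (hg.squarefree x ((hcop.mul_left hcop).dvd_of_dvd_mul_right hxx))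

theorem HasFactorType.splits {F : Type*} [Field F] {f : F[X]} (hf : HasFactorType f 1) :
    f.Splits := by
  obtain ⟨g, h, -, hg, hh, rfl⟩ := hf
  exact (Splits.of_natDegree_eq_one hg).mul hh

/-- The monic polynomial `X ^ d + ∑ i, v i * X ^ i` of degree `d`, by which monic polynomials are
parametrized by their lower coefficients. -/
noncomputable def monicOfCoeffs {R : Type*} [CommRing R] {d : ℕ} (v : Fin d → R) : R[X] :=
  X ^ d + ∑ i : Fin d, C (v i) * X ^ (i : ℕ)

section MonicOfCoeffs

variable {R : Type*} [CommRing R] {d : ℕ}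

theorem coeff_monicOfCoeffs (v : Fin d → R) (i : Fin d) : (monicOfCoeffs v).coeff i = v i := by
  simp [monicOfCoeffs, coeff_X_pow, coeff_C_mul, i.2.ne, Fin.val_inj]

theorem monicOfCoeffs_injective : Function.Injective (monicOfCoeffs : (Fin d → R) → R[X]) :=
  fun v w h ↦ funext fun i ↦ by rw [← coeff_monicOfCoeffs v, h, coeff_monicOfCoeffs]

theorem map_monicOfCoeffs {S : Type*} [CommRing S] (φ : R →+* S) (v : Fin d → R) :
    (monicOfCoeffs v).map φ = monicOfCoeffs (φ ∘ v) := by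
  simp [monicOfCoeffs, Polynomial.map_sum]

variable [Nontrivial R]

theorem isMonicOfDegree_monicOfCoeffs (v : Fin d → R) : IsMonicOfDegree (monicOfCoeffs v) d := by
  have hlt := degree_sum_fin_lt v
  refine ⟨natDegree_eq_of_degree_eq_some ?_, monic_X_pow_add hlt⟩
  rw [monicOfCoeffs, degree_add_eq_left_of_degree_lt (by rwa [degree_X_pow]), degree_X_pow]

theorem monicOfCoeffs_coeff {f : R[X]} (hf : IsMonicOfDegree f d) :
    monicOfCoeffs (fun i : Fin d ↦ f.coeff i) = f := by
  ext i
  rcases lt_or_ge i d with hi | hi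
  · exact coeff_monicOfCoeffs (fun i : Fin d ↦ f.coeff i) ⟨i, hi⟩
  · exact (isMonicOfDegree_monicOfCoeffs _).coeff_eq hf hi

theorem ncard_setOf_monicOfCoeffs_insertNth {n : ℕ} (k : Fin (n + 1)) (a : R) (Q : R[X] → Prop) :
    {w : Fin n → R | Q (monicOfCoeffs (k.insertNth a w))}.ncard =
      {f : R[X] | IsMonicOfDegree f (n + 1) ∧ f.coeff k = a ∧ Q f}.ncard := by
  have hinj : Function.Injective fun w : Fin n → R ↦
      monicOfCoeffs (k.insertNth a w : Fin (n + 1) → R) :=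
    monicOfCoeffs_injective.comp (Fin.insertNth_right_injective (α := fun _ ↦ R) a)
  rw [← Set.ncard_image_of_injective _ hinj]
  congr 1
  ext f
  constructor
  · rintro ⟨w, hw, rfl⟩
    exact ⟨isMonicOfDegree_monicOfCoeffs _, by rw [coeff_monicOfCoeffs, Fin.insertNth_apply_same],
      hw⟩
  · rintro ⟨hf, hfk, hQ⟩
    have h : monicOfCoeffs (k.insertNth a fun i ↦ f.coeff (k.succAbove i)) = f := by
      rw [← hfk]
      exact (congrArg _ (Fin.insertNth_self_removeNth k fun i : Fin (n + 1) ↦ f.coeff i)).trans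
        (monicOfCoeffs_coeff hf)
    exact ⟨fun i ↦ f.coeff (k.succAbove i), by rwa [Set.mem_ofPred_eq, h], h⟩

end MonicOfCoeffs

theorem HasFactorType.X_sub_C_mul {F : Type*} [Field F] {f : F[X]} {m : ℕ}
    (hf : HasFactorType f m) (r : F) : HasFactorType ((X - C r) * f) m := by
  obtain ⟨g, h, hg, hm, hh, rfl⟩ := hf
  exact ⟨g, (X - C r) * h, hg, hm, (Splits.X_sub_C r).mul hh, mul_left_comm _ _ _⟩

section FiniteField

open scoped Classical

variable {F : Type*} [Field F] [Fintype F]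

variable (F) in
/-- The finite set of monic polynomials of degree `d` over a finite field. -/
noncomputable def monics (d : ℕ) : Finset F[X] :=
  Finset.univ.map ⟨monicOfCoeffs, monicOfCoeffs_injective (d := d)⟩

theorem mem_monics {d : ℕ} {f : F[X]} : f ∈ monics F d ↔ IsMonicOfDegree f d := by
  simp only [monics, Finset.mem_map, mem_univ, true_and, Function.Embedding.coeFn_mk]
  exact ⟨fun ⟨v, hv⟩ ↦ hv ▸ isMonicOfDegree_monicOfCoeffs v, fun hf ↦ ⟨_, monicOfCoeffs_coeff hf⟩⟩

theorem card_monics (d : ℕ) : #(monics F d) = Fintype.card F ^ d := by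
  simp [monics]

theorem ncard_insertNth_eq_card_filter {n : ℕ} (k : Fin (n + 1)) (a : F) (Q : F[X] → Prop) :
    {w : Fin n → F | Q (monicOfCoeffs (k.insertNth a w))}.ncard =
      #{f ∈ monics F (n + 1) | f.coeff k = a ∧ Q f} := by
  rw [ncard_setOf_monicOfCoeffs_insertNth, ← Set.ncard_coe_finset]
  simp only [coe_filter, mem_monics]

theorem card_mul_card_le_of_add_smul_mem {M : Type*} [AddCommGroup M] [Module F M] (φ : M →ₗ[F] F)
    {t : M} (ht : φ t ≠ 0) {b : F} {S T : Finset M} (hS : ∀ x ∈ S, φ x = b)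
    (hT : ∀ x ∈ S, ∀ c : F, x + c • t ∈ T) : #S * Fintype.card F ≤ #T := by
  rw [← card_univ, ← card_product]
  refine card_le_card_of_injOn (fun z ↦ z.1 + z.2 • t)
    (fun z hz ↦ hT _ (mem_product.1 hz).1 _) fun z hz z' hz' h ↦ ?_
  dsimp only at h
  have hφ := congrArg φ h
  simp only [map_add, map_smul, hS _ (mem_product.1 hz).1, hS _ (mem_product.1 hz').1, smul_eq_mul,
    add_right_inj, mul_left_inj' ht] at hφ
  rw [hφ] at h
  exact Prod.ext (add_right_cancel h) hφ

theorem card_filter_coeff_eq_zero_mul_le {d k : ℕ} (hk : k ≤ d) :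
    #{f ∈ monics F d | f.coeff k = 0} * Fintype.card F ≤ Fintype.card F ^ d := by
  rcases hk.eq_or_lt with rfl | hk
  · rw [filter_false_of_mem, card_empty, zero_mul]
    · exact zero_le
    · intro f hf
      rw [((isMonicOfDegree_iff _ _).1 (mem_monics.1 hf)).2]
      exact one_ne_zero
  · rw [← card_monics]
    refine card_mul_card_le_of_add_smul_mem (lcoeff F k) (t := X ^ k) (b := 0) (by simp)
      (fun f hf ↦ (mem_filter.1 hf).2) fun f hf c ↦ mem_monics.2 ?_
    refine (mem_monics.1 (mem_filter.1 hf).1).add_right ?_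
    exact (natDegree_smul_le _ _).trans_lt (by rwa [natDegree_X_pow])

theorem card_le_mul_card_of_X_sub_C_mul_mem {d : ℕ} {Z : Finset (F[X] × F)} {S : Finset F[X]}
    (hZ : ∀ z ∈ Z, (X - C z.2) * z.1 ∈ S) (hS : S ⊆ monics F d) : #Z ≤ d * #S := by
  refine card_le_mul_card_image_of_maps_to hZ d fun f hf ↦ ?_
  have hfd := mem_monics.1 (hS hf)
  refine le_trans (card_le_card_of_injOn Prod.snd (t := f.roots.toFinset) ?_ ?_)
    ((Multiset.toFinset_card_le _).trans ((card_roots' f).trans hfd.natDegree_eq.le))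
  · intro z hz
    rw [mem_coe, Multiset.mem_toFinset, mem_roots hfd.ne_zero, ← dvd_iff_isRoot]
    exact ⟨z.1, (mem_filter.1 hz).2.symm⟩
  · intro z hz z' hz' h
    have hmul := (mem_filter.1 hz).2.trans (mem_filter.1 hz').2.symm
    rw [h] at hmul
    exact Prod.ext (mul_left_cancel₀ (X_sub_C_ne_zero _) hmul) h

theorem X_sub_C_mul_mem_monics {d : ℕ} {f : F[X]} (hf : f ∈ monics F d) (r : F) :
    (X - C r) * f ∈ monics F (d + 1) :=
  mem_monics.2 (add_comm d 1 ▸ (isMonicOfDegree_X_sub_one r).mul (mem_monics.1 hf))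

theorem card_filter_hasFactorType_mul_le (m e : ℕ) :
    #{f ∈ monics F e | HasFactorType f m} * Fintype.card F ≤
      (e + 1) * #{f ∈ monics F (e + 1) | HasFactorType f m} := by
  rw [← card_univ, ← card_product]
  refine card_le_mul_card_of_X_sub_C_mul_mem (fun z hz ↦ ?_) (filter_subset _ _)
  have hz := mem_filter.1 (mem_product.1 hz).1
  exact mem_filter.2 ⟨X_sub_C_mul_mem_monics hz.1 _, hz.2.X_sub_C_mul _⟩

theorem card_pow_le_mul_card_filter_irreducible_add {K : Type*} [Field K] [Finite K] [Algebra F K]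
    {m : ℕ} (hm : Module.finrank F K = m) :
    Fintype.card F ^ m ≤
      m * (#{f ∈ monics F m | Irreducible f} + #{f ∈ monics F m | f.coeff 0 = 0}) := by
  have := Fintype.ofFinite K
  have hint (x : K) : IsIntegral F x := Algebra.IsIntegral.isIntegral x
  have hdeg (x : K) : (minpoly F x).natDegree ≤ m := hm ▸ minpoly.natDegree_le x
  have hmem (x : K) : minpoly F x * X ^ (m - (minpoly F x).natDegree) ∈ monics F m := by
    refine mem_monics.2 ?_
    have h := IsMonicOfDegree.mul ⟨rfl, minpoly.monic (hint x)⟩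
      (isMonicOfDegree_X_pow F (m - (minpoly F x).natDegree))
    rwa [Nat.add_sub_cancel' (hdeg x)] at h
  rw [← hm, ← Module.card_eq_pow_finrank, hm, ← card_univ]
  refine le_trans ?_ (Nat.mul_le_mul_left m (card_union_le _ _))
  refine card_le_mul_card_image_of_maps_to
    (f := fun x : K ↦ minpoly F x * X ^ (m - (minpoly F x).natDegree)) (fun x _ ↦ ?_) m
    fun f hf ↦ ?_
  · rcases (hdeg x).lt_or_eq with hlt | heq
    · refine mem_union_right _ (mem_filter.2 ⟨hmem x, ?_⟩)
      rw [mul_coeff_zero, coeff_X_pow, if_neg (Nat.sub_pos_of_lt hlt).ne, mul_zero]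
    · refine mem_union_left _ (mem_filter.2 ⟨hmem x, ?_⟩)
      rw [heq, Nat.sub_self, pow_zero, mul_one]
      exact minpoly.irreducible (hint x)
  · have hfm : IsMonicOfDegree f m :=
      mem_monics.1 ((mem_union.1 hf).elim (mem_of_mem_filter f) (mem_of_mem_filter f))
    have hsub : #{x : K | minpoly F x * X ^ (m - (minpoly F x).natDegree) = f} ≤
        #(f.map (algebraMap F K)).roots.toFinset := by
      refine card_le_card fun x hx ↦ ?_
      rw [Multiset.mem_toFinset, mem_roots (hfm.monic.map _).ne_zero, IsRoot.def,
        eval_map_algebraMap, ← (mem_filter.1 hx).2, map_mul, minpoly.aeval, zero_mul]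
    refine hsub.trans ((Multiset.toFinset_card_le _).trans ((card_roots' _).trans ?_))
    exact natDegree_map_le.trans hfm.natDegree_eq.le

theorem card_pow_le_mul_card_filter_irreducible {m : ℕ} (hm : m ≠ 0)
    (hq : 2 * m ≤ Fintype.card F) :
    Fintype.card F ^ m ≤ 2 * m * #{f ∈ monics F m | Irreducible f} := by
  obtain ⟨p, _⟩ := CharP.exists F
  have : Fact p.Prime := ⟨CharP.char_is_prime F p⟩
  have : NeZero m := ⟨hm⟩
  have hcard := card_pow_le_mul_card_filter_irreducible_add (FiniteField.finrank_extension F p m)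
  have hzero := card_filter_coeff_eq_zero_mul_le (F := F) m.zero_le
  refine Nat.le_of_mul_le_mul_right ?_ (Fintype.card_pos (α := F))
  nlinarith [Nat.mul_le_mul_right (Fintype.card F) hcard, Nat.mul_le_mul_left m hzero,
    Nat.mul_le_mul_right (Fintype.card F ^ m) hq]

theorem card_pow_le_mul_card_filter_hasFactorType {m e : ℕ} (hm : m ≠ 0) (hme : m ≤ e)
    (hq : 2 * m ≤ Fintype.card F) :
    Fintype.card F ^ e ≤ 2 * e.factorial * #{f ∈ monics F e | HasFactorType f m} := by
  induction e, hme using Nat.le_induction with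
  | base =>
    refine (card_pow_le_mul_card_filter_irreducible hm hq).trans ?_
    gcongr ?_ * ?_
    · exact Nat.mul_le_mul_left 2 m.self_le_factorial
    · refine card_le_card fun f hf ↦ ?_
      have hf := mem_filter.1 hf
      exact mem_filter.2 ⟨hf.1, f, 1, hf.2, (mem_monics.1 hf.1).natDegree_eq, Splits.one,
        (mul_one f).symm⟩
  | succ e _ ih =>
    calc Fintype.card F ^ (e + 1)
        ≤ 2 * e.factorial * (#{f ∈ monics F e | HasFactorType f m} * Fintype.card F) := by
          rw [pow_succ, ← mul_assoc]
          exact Nat.mul_le_mul_right _ ih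
      _ ≤ 2 * e.factorial * ((e + 1) * #{f ∈ monics F (e + 1) | HasFactorType f m}) :=
          Nat.mul_le_mul_left _ (card_filter_hasFactorType_mul_le m e)
      _ = _ := by rw [Nat.factorial_succ]; ring

theorem card_filter_hasFactorType_le_coeff_eq {n k : ℕ} (hk : k ≤ n + 1) (a : F) (m : ℕ) :
    #{f ∈ monics F (n + 1) | HasFactorType f m} ≤
      (n + 2) * #{f ∈ monics F (n + 2) | f.coeff k = a ∧ HasFactorType f m} +
        Fintype.card F ^ n := by
  set U := {f ∈ monics F (n + 1) | HasFactorType f m}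
  have hzero : #{u ∈ U | u.coeff k = 0} ≤ Fintype.card F ^ n := by
    refine Nat.le_of_mul_le_mul_right ?_ (Fintype.card_pos (α := F))
    rw [← pow_succ]
    exact le_trans (Nat.mul_le_mul_right _ (card_le_card (filter_subset_filter _
      (filter_subset _ _)))) (card_filter_coeff_eq_zero_mul_le hk)
  -- The coefficient of `X ^ k` in `(X - C r) * u` is affine in `r`, with slope `-u.coeff k`.
  have hZ : #({u ∈ U | ¬ u.coeff k = 0}.image fun u ↦ (u, ((X * u).coeff k - a) / u.coeff k)) ≤
      (n + 2) * #{f ∈ monics F (n + 2) | f.coeff k = a ∧ HasFactorType f m} := by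
    refine card_le_mul_card_of_X_sub_C_mul_mem (fun z hz ↦ ?_) (filter_subset _ _)
    obtain ⟨u, hu, rfl⟩ := mem_image.1 hz
    obtain ⟨huU, hu0⟩ := mem_filter.1 hu
    obtain ⟨hum, htype⟩ := mem_filter.1 huU
    refine mem_filter.2 ⟨X_sub_C_mul_mem_monics hum _, ?_, htype.X_sub_C_mul _⟩
    rw [sub_mul, coeff_sub, coeff_C_mul, div_mul_cancel₀ _ hu0, sub_sub_cancel]
  rw [card_image_of_injective _ fun _ _ h ↦ congrArg Prod.fst h] at hZ
  rw [← card_filter_add_card_filter_not fun u : F[X] ↦ u.coeff k = 0]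
  omega

theorem card_filter_quadratic_eq_zero_le {a b : F} (c : F) (h : a ≠ 0 ∨ b ≠ 0) :
    #{s : F | a * s ^ 2 + b * s + c = 0} ≤ 2 := by
  have hP : (C a * X ^ 2 + C b * X + C c : F[X]) ≠ 0 := by
    intro hP
    have ha : a = 0 := by simpa [coeff_C] using congrArg (coeff · 2) hP
    have hb : b = 0 := by simpa [coeff_C] using congrArg (coeff · 1) hP
    exact h.elim (· ha) (· hb)
  refine le_trans (card_le_card (t := (C a * X ^ 2 + C b * X + C c).roots.toFinset) fun s hs ↦ ?_)
    ((Multiset.toFinset_card_le _).trans ((card_roots' _).trans natDegree_quadratic_le))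
  simpa [mem_roots hP] using hs

theorem card_filter_coeff_eq_zero_and_coeff_X_mul_eq_zero_mul_le {n k : ℕ} (hk : k ≤ n + 1) :
    #{u ∈ monics F n | u.coeff k = 0 ∧ (X * u).coeff k = 0} * Fintype.card F ≤
      Fintype.card F ^ n := by
  rcases hk.lt_or_eq with hk | rfl
  · refine le_trans (Nat.mul_le_mul_right _ (card_le_card ?_))
      (card_filter_coeff_eq_zero_mul_le (Nat.le_of_lt_succ hk))
    exact monotone_filter_right _ fun u _ hu ↦ hu.1
  · rw [filter_false_of_mem, card_empty, zero_mul]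
    · exact zero_le
    · rintro u hu ⟨-, h⟩
      rw [coeff_X_mul, ((isMonicOfDegree_iff _ _).1 (mem_monics.1 hu)).2] at h
      exact one_ne_zero h

theorem card_filter_coeff_X_sub_C_sq_mul_eq_le {n k : ℕ} (a : F) (h2 : (2 : F) ≠ 0) :
    #{z ∈ {u ∈ monics F n | ¬ (u.coeff k = 0 ∧ (X * u).coeff k = 0)} ×ˢ univ |
        ((X - C z.2) ^ 2 * z.1).coeff k = a} ≤ 2 * Fintype.card F ^ n := by
  have hcoeff (u : F[X]) (s : F) : ((X - C s) ^ 2 * u).coeff k =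
      u.coeff k * s ^ 2 + -2 * (X * u).coeff k * s + (X ^ 2 * u).coeff k := by
    have : (X - C s) ^ 2 * u = C (s ^ 2) * u + C (-2 * s) * (X * u) + X ^ 2 * u := by
      simp only [map_mul, map_pow, map_neg, C_ofNat]
      ring
    rw [this, coeff_add, coeff_add, coeff_C_mul, coeff_C_mul]
    ring
  rw [← card_monics]
  refine card_le_mul_card_image_of_maps_to (f := Prod.fst)
    (fun z hz ↦ (mem_filter.1 (mem_product.1 (mem_filter.1 hz).1).1).1) 2 fun u _ ↦ ?_
  by_cases hu : u.coeff k = 0 ∧ (X * u).coeff k = 0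
  · rw [filter_false_of_mem, card_empty]
    · exact zero_le
    · rintro z hz rfl
      exact (mem_filter.1 (mem_product.1 (mem_filter.1 hz).1).1).2 hu
  · have hquad : u.coeff k ≠ 0 ∨ -2 * (X * u).coeff k ≠ 0 := by
      rw [mul_ne_zero_iff, neg_ne_zero]
      tauto
    refine le_trans (card_le_card_of_injOn Prod.snd ?_ ?_)
      (card_filter_quadratic_eq_zero_le ((X ^ 2 * u).coeff k - a) hquad)
    · intro z hz
      obtain ⟨hz', rfl⟩ := mem_filter.1 hz
      refine mem_filter.2 ⟨mem_univ _, ?_⟩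
      rw [← add_sub_assoc, ← hcoeff, (mem_filter.1 hz').2, sub_self]
    · intro z hz z' hz' h
      exact Prod.ext ((mem_filter.1 hz).2.trans (mem_filter.1 hz').2.symm) h

theorem card_filter_X_sub_C_sq_dvd_le {n k : ℕ} (hk : k ≤ n + 1) (a : F) (h2 : (2 : F) ≠ 0) :
    #{f ∈ monics F (n + 2) | f.coeff k = a ∧ ∃ r, (X - C r) ^ 2 ∣ f} ≤ 3 * Fintype.card F ^ n := by
  let B := {u ∈ monics F n | u.coeff k = 0 ∧ (X * u).coeff k = 0} ×ˢ (univ : Finset F)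
  let Z := {z ∈ {u ∈ monics F n | ¬ (u.coeff k = 0 ∧ (X * u).coeff k = 0)} ×ˢ (univ : Finset F) |
    ((X - C z.2) ^ 2 * z.1).coeff k = a}
  have hB : #B ≤ Fintype.card F ^ n := by
    rw [card_product, card_univ]
    exact card_filter_coeff_eq_zero_and_coeff_X_mul_eq_zero_mul_le hk
  have hZ : #Z ≤ 2 * Fintype.card F ^ n := card_filter_coeff_X_sub_C_sq_mul_eq_le a h2
  have hsub : {f ∈ monics F (n + 2) | f.coeff k = a ∧ ∃ r, (X - C r) ^ 2 ∣ f} ⊆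
      (B ∪ Z).image fun z ↦ (X - C z.2) ^ 2 * z.1 := by
    intro f hf
    obtain ⟨hf, hfk, r, u, rfl⟩ := mem_filter.1 hf
    have hu : u ∈ monics F n := mem_monics.2 <|
      ((isMonicOfDegree_X_sub_one r).pow 2).of_mul_left (add_comm n _ ▸ mem_monics.1 hf)
    refine mem_image.2 ⟨(u, r), ?_, rfl⟩
    by_cases hbad : u.coeff k = 0 ∧ (X * u).coeff k = 0
    · exact mem_union_left _ (mem_product.2 ⟨mem_filter.2 ⟨hu, hbad⟩, mem_univ _⟩)
    · refine mem_union_right _ (mem_filter.2 ⟨?_, hfk⟩)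
      exact mem_product.2 ⟨mem_filter.2 ⟨hu, hbad⟩, mem_univ _⟩
  have := (card_le_card hsub).trans (card_image_le.trans (card_union_le _ _))
  omega

theorem card_pow_le_mul_card_filter_separable_hasFactorType {n k m : ℕ} (hk : k ≤ n + 1) (a : F)
    (h2 : (2 : F) ≠ 0) (hq : 16 * (n + 2).factorial ≤ Fintype.card F) (hm : m ≠ 0)
    (hmn : m ≤ n + 1) :
    Fintype.card F ^ (n + 1) ≤ 4 * (n + 2).factorial *
      #{f ∈ monics F (n + 2) | f.coeff k = a ∧ f.Separable ∧ HasFactorType f m} := by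
  have hfac := Nat.factorial_succ (n + 1)
  have hself := Nat.self_le_factorial (n + 2)
  have htype := card_pow_le_mul_card_filter_hasFactorType (F := F) hm hmn (by omega)
  have hfix := card_filter_hasFactorType_le_coeff_eq hk a m
  have hsq := card_filter_X_sub_C_sq_dvd_le hk a h2
  have hsub : {f ∈ monics F (n + 2) | f.coeff k = a ∧ HasFactorType f m} ⊆
      {f ∈ monics F (n + 2) | f.coeff k = a ∧ f.Separable ∧ HasFactorType f m} ∪
        {f ∈ monics F (n + 2) | f.coeff k = a ∧ ∃ r, (X - C r) ^ 2 ∣ f} := by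
    intro f hf
    obtain ⟨hmon, hfk, hft⟩ := mem_filter.1 hf
    by_cases hr : ∃ r, (X - C r) ^ 2 ∣ f
    · exact mem_union_right _ (mem_filter.2 ⟨hmon, hfk, hr⟩)
    · exact mem_union_left _ (mem_filter.2
        ⟨hmon, hfk, hft.separable (mem_monics.1 hmon).ne_zero (not_exists.1 hr), hft⟩)
  have hcard := (card_le_card hsub).trans (card_union_le _ _)
  have hlarge := Nat.mul_le_mul_left (Fintype.card F ^ n) hq
  suffices Fintype.card F ^ (n + 1) ≤ 2 * (n + 2).factorial *
      #{f ∈ monics F (n + 2) | f.coeff k = a ∧ f.Separable ∧ HasFactorType f m} +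
        8 * (n + 2).factorial * Fintype.card F ^ n by
    rw [pow_succ] at this ⊢
    linarith
  refine htype.trans ((Nat.mul_le_mul_left _ hfix).trans ?_)
  rw [hfac]
  nlinarith [Nat.mul_le_mul_left ((n + 2) * (n + 1).factorial) (hcard.trans
    (Nat.add_le_add_left hsq _)), Nat.zero_le (n * (n + 1).factorial * Fintype.card F ^ n)]

theorem card_filter_isRoot_mul_le {n k : ℕ} (hk : k ≤ n + 1) {a : F} (ha : k = 0 → a ≠ 0)
    (r : F) :
    #{f ∈ monics F (n + 2) | f.coeff k = a ∧ f.IsRoot r} * Fintype.card F ≤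
      #{f ∈ monics F (n + 2) | f.coeff k = a} := by
  by_cases hr : k = 0 ∧ r = 0
  · obtain ⟨rfl, rfl⟩ := hr
    rw [filter_false_of_mem, card_empty, zero_mul]
    · exact zero_le
    · rintro f - ⟨rfl, hf⟩
      exact ha rfl (by rwa [coeff_zero_eq_eval_zero])
  · obtain ⟨j, hj, hjk, hrj⟩ : ∃ j < n + 2, j ≠ k ∧ r ^ j ≠ 0 := by
      by_cases hk0 : k = 0
      · exact ⟨1, by omega, by omega, by simpa [hk0] using hr⟩
      · exact ⟨0, by omega, Ne.symm hk0, by simp⟩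
    refine card_mul_card_le_of_add_smul_mem (leval r) (t := X ^ j) (b := 0)
      (by rwa [leval_apply, eval_pow, eval_X]) ?_ ?_
    · exact fun f hf ↦ (mem_filter.1 hf).2.2
    · intro f hf c
      obtain ⟨hmon, hfk, -⟩ := mem_filter.1 hf
      refine mem_filter.2 ⟨mem_monics.2 ((mem_monics.1 hmon).add_right ?_), ?_⟩
      · exact (natDegree_smul_le _ _).trans_lt (by rwa [natDegree_X_pow])
      · rw [coeff_add, coeff_smul, coeff_X_pow, if_neg hjk.symm, smul_zero, add_zero, hfk]

theorem sum_card_roots_toFinset_eq {V : Finset F[X]} (hV : ∀ f ∈ V, f ≠ 0) :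
    ∑ f ∈ V, #f.roots.toFinset = ∑ r, #{f ∈ V | f.IsRoot r} := by
  simp only [card_filter]
  rw [sum_comm]
  refine sum_congr rfl fun f hf ↦ ?_
  rw [← card_filter]
  exact congrArg card (ext fun r ↦ by simp [hV f hf])

-- On average a polynomial has at most one root, so those with several are outnumbered by those
-- with none.
theorem card_filter_one_lt_card_roots_le {n k : ℕ} (hk : k ≤ n + 1) {a : F} (ha : k = 0 → a ≠ 0) :
    #{f ∈ monics F (n + 2) | f.coeff k = a ∧ 1 < #f.roots.toFinset} ≤
      #{f ∈ monics F (n + 2) | f.coeff k = a ∧ ∀ r, ¬ f.IsRoot r} := by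
  set V := {f ∈ monics F (n + 2) | f.coeff k = a} with hV
  have hV0 (f) (hf : f ∈ V) : f ≠ 0 := (mem_monics.1 (mem_of_mem_filter f hf)).ne_zero
  simp only [← filter_filter, ← hV]
  have hmean : ∑ f ∈ V, #f.roots.toFinset ≤ #V := by
    refine Nat.le_of_mul_le_mul_right ?_ (Fintype.card_pos (α := F))
    calc (∑ f ∈ V, #f.roots.toFinset) * Fintype.card F
        = ∑ r : F, #{f ∈ V | f.IsRoot r} * Fintype.card F := by
          rw [sum_card_roots_toFinset_eq hV0, sum_mul]
      _ ≤ ∑ _r : F, #V := sum_le_sum fun r _ ↦ by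
          rw [hV, filter_filter]
          exact card_filter_isRoot_mul_le hk ha r
      _ = #V * Fintype.card F := by rw [sum_const, card_univ, smul_eq_mul, mul_comm]
  have hpoint : ∑ f ∈ V, (1 + if 1 < #f.roots.toFinset then 1 else 0) ≤
      ∑ f ∈ V, (#f.roots.toFinset + if ∀ r, ¬ f.IsRoot r then 1 else 0) := by
    refine sum_le_sum fun f hf ↦ ?_
    have hnone : (∀ r, ¬ f.IsRoot r) ↔ #f.roots.toFinset = 0 := by
      simp [Finset.card_eq_zero, Finset.eq_empty_iff_forall_notMem, hV0 f hf]
    simp only [hnone]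
    split_ifs <;> omega
  rw [sum_add_distrib, sum_add_distrib, ← card_filter, ← card_filter, ← card_eq_sum_ones] at hpoint
  omega

theorem card_pow_le_mul_card_filter_not_isRoot {n k : ℕ} (hk : k ≤ n + 1) {a : F}
    (ha : k = 0 → a ≠ 0) (h2 : (2 : F) ≠ 0) (hq : 16 * (n + 2).factorial ≤ Fintype.card F) :
    Fintype.card F ^ (n + 1) ≤ 4 * (n + 2).factorial *
      #{f ∈ monics F (n + 2) | f.coeff k = a ∧ ∀ r, ¬ f.IsRoot r} := by
  refine (card_pow_le_mul_card_filter_separable_hasFactorType hk a h2 hq one_ne_zero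
    (Nat.le_add_left 1 n)).trans (Nat.mul_le_mul_left _ ?_)
  refine le_trans (card_le_card fun f hf ↦ ?_) (card_filter_one_lt_card_roots_le hk ha)
  obtain ⟨hmon, hfk, hsep, htype⟩ := mem_filter.1 hf
  refine mem_filter.2 ⟨hmon, hfk, ?_⟩
  rw [Multiset.toFinset_card_of_nodup (nodup_roots hsep), ← htype.splits.natDegree_eq_card_roots,
    (mem_monics.1 hmon).natDegree_eq]
  omega

theorem card_pow_le_mul_card_filter_separable_hasFactorType_two {n k : ℕ} (hk : k ≤ n + 1) {a : F}
    (ha : k = 0 → a ≠ 0) (h2 : (2 : F) ≠ 0) (hq : 16 * (n + 2).factorial ≤ Fintype.card F) :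
    Fintype.card F ^ (n + 1) ≤ 4 * (n + 2).factorial *
      #{f ∈ monics F (n + 2) | f.coeff k = a ∧ f.Separable ∧ HasFactorType f 2} := by
  rcases n.eq_zero_or_pos with rfl | hn
  · refine (card_pow_le_mul_card_filter_not_isRoot hk ha h2 hq).trans (Nat.mul_le_mul_left _ ?_)
    refine card_le_card fun f hf ↦ ?_
    obtain ⟨hmon, hfk, hroot⟩ := mem_filter.1 hf
    obtain ⟨hdeg, hf1⟩ := mem_monics.1 hmon
    have hirr : Irreducible f := by
      rw [hf1.irreducible_iff_roots_eq_zero_of_degree_le_three hdeg.ge (by omega),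
        Multiset.eq_zero_iff_forall_notMem]
      exact fun r hr ↦ hroot r (isRoot_of_mem_roots hr)
    exact mem_filter.2 ⟨hmon, hfk, PerfectField.separable_of_irreducible hirr, f, 1, hirr, hdeg,
      Splits.one, (mul_one f).symm⟩
  · exact card_pow_le_mul_card_filter_separable_hasFactorType hk a h2 hq two_ne_zero
      (Nat.succ_le_succ hn)

end FiniteField

section Density

variable {ι : Type*} [Fintype ι] [DecidableEq ι]

variable (ι) in
/-- The integer points of the cube `[-N, N] ^ ι`. -/
noncomputable def integerBox (N : ℕ) : Finset (ι → ℤ) :=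
  Fintype.piFinset fun _ ↦ Finset.Icc (-N : ℤ) N

theorem mem_integerBox {N : ℕ} {w : ι → ℤ} : w ∈ integerBox ι N ↔ ∀ i, |w i| ≤ N := by
  simp [integerBox, abs_le]

theorem card_integerBox (N : ℕ) : #(integerBox ι N) = (2 * N + 1) ^ Fintype.card ι := by
  rw [integerBox, Fintype.card_piFinset, prod_const, card_univ, Int.card_Icc]
  congr 1
  omega

variable (ι) in
/-- The filter of sets of integer points whose complements have density zero with respect to the
cubes `integerBox ι N`, so that `∀ᶠ w in densityOne ι, P w` says that almost all integer points
satisfy `P`. -/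
def densityOne : Filter (ι → ℤ) where
  sets := {S | Tendsto (fun N ↦ ((↑(integerBox ι N) \ S : Set _).ncard : ℝ) / #(integerBox ι N))
    atTop (𝓝 0)}
  univ_sets := by simp
  sets_of_superset hS hST := by
    refine squeeze_zero (fun N ↦ by positivity) (fun N ↦ ?_) hS
    gcongr
    exact (integerBox ι N).finite_toSet.sdiff
  inter_sets {S T} hS hT := by
    refine squeeze_zero (fun N ↦ by positivity) (fun N ↦ ?_) (add_zero (0 : ℝ) ▸ hS.add hT)
    rw [← add_div, Set.sdiff_inter]
    gcongr
    exact_mod_cast Set.ncard_union_le _ _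

theorem tendsto_ncard_div_of_eventually_densityOne {P : (ι → ℤ) → Prop}
    (hP : ∀ᶠ w in densityOne ι, P w) :
    Tendsto (fun N ↦ ({w | w ∈ integerBox ι N ∧ P w}.ncard : ℝ) / #(integerBox ι N))
      atTop (𝓝 1) := by
  have h := (tendsto_const_nhds (x := (1 : ℝ))).sub hP
  rw [sub_zero] at h
  refine h.congr fun N ↦ ?_
  have hpos : (#(integerBox ι N) : ℝ) ≠ 0 := by
    rw [card_integerBox]
    positivity
  have hsplit := Set.ncard_inter_add_ncard_sdiff_eq_ncard (integerBox ι N : Set (ι → ℤ)) {w | P w}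
    (integerBox ι N).finite_toSet
  rw [Set.ncard_coe_finset] at hsplit
  rw [sub_eq_iff_eq_add, ← add_div, eq_comm, div_eq_one_iff_eq hpos]
  exact_mod_cast hsplit

theorem eventually_densityOne_of_forall_exists_le {P : (ι → ℤ) → Prop}
    (h : ∀ ε : ℝ, 0 < ε → ∀ᶠ N in atTop,
      ({w | w ∈ integerBox ι N ∧ ¬ P w}.ncard : ℝ) ≤ ε * #(integerBox ι N)) :
    ∀ᶠ w in densityOne ι, P w := by
  refine tendsto_order.2 ⟨fun b hb ↦ Eventually.of_forall fun N ↦ hb.trans_le (by positivity),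
    fun b hb ↦ (h (b / 2) (by positivity)).mono fun N hN ↦ ?_⟩
  have hpos : (0 : ℝ) < #(integerBox ι N) := by
    rw [card_integerBox]
    positivity
  exact ((div_le_iff₀ hpos).2 hN).trans_lt (half_lt_self hb)

end Density

section Sieve

theorem card_mul_le_of_modEq {N M : ℕ} {T : Finset ℤ} (hT : ∀ x ∈ T, |x| ≤ N)
    (hmod : ∀ x ∈ T, ∀ y ∈ T, x ≡ y [ZMOD M]) : #T * M ≤ 2 * N + M := by
  have hcard : #(Finset.Ico (-N : ℤ) (N + M)) = 2 * N + M := by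
    rw [Int.card_Ico]
    omega
  have hprod : #(T ×ˢ Finset.range M) = #T * M := by rw [card_product, card_range]
  rw [← hcard, ← hprod]
  refine card_le_card_of_injOn (fun z ↦ z.1 + (z.2 : ℤ)) (fun z hz ↦ ?_) fun z hz z' hz' h ↦ ?_
  · obtain ⟨hz₁, hz₂⟩ := mem_product.1 hz
    have := abs_le.1 (hT _ hz₁)
    rw [Finset.mem_range] at hz₂
    rw [mem_coe, Finset.mem_Ico]
    dsimp only
    omega
  · obtain ⟨hz₁, hz₂⟩ := mem_product.1 hz
    obtain ⟨hz₁', hz₂'⟩ := mem_product.1 hz'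
    dsimp only at h
    have hz : z.2 ≡ z'.2 [MOD M] := by
      rw [← Int.natCast_modEq_iff]
      exact (hmod _ hz₁ _ hz₁').add_left_cancel (by rw [h])
    have heq : z.2 = z'.2 := hz.eq_of_lt_of_lt (Finset.mem_range.1 hz₂) (Finset.mem_range.1 hz₂')
    rw [heq] at h
    exact Prod.ext (add_right_cancel h) heq

variable {ι J : Type*} [Fintype ι] [DecidableEq ι] {m : J → ℕ} {S : Finset J}

theorem card_filter_residues_eq_mul_le (hS : (S : Set J).Pairwise (Function.onFun Nat.Coprime m))
    (N : ℕ) (v : ∀ j ∈ S, ι → ZMod (m j)) :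
    #{w ∈ integerBox ι N | (fun j (_ : j ∈ S) i ↦ (w i : ZMod (m j))) = v} *
      (∏ j ∈ S, m j) ^ Fintype.card ι ≤ (2 * N + ∏ j ∈ S, m j) ^ Fintype.card ι := by
  set T : ι → Finset ℤ := fun i ↦
    {x ∈ Finset.Icc (-N : ℤ) N | ∀ j (hj : j ∈ S), (x : ZMod (m j)) = v j hj i}
  have hpi : {w ∈ integerBox ι N | (fun j (_ : j ∈ S) i ↦ (w i : ZMod (m j))) = v} ⊆
      Fintype.piFinset T := fun w hw ↦ by
    obtain ⟨hbox, rfl⟩ := Finset.mem_filter.1 hw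
    exact Fintype.mem_piFinset.2 fun i ↦
      Finset.mem_filter.2 ⟨Fintype.mem_piFinset.1 hbox i, fun _ _ ↦ rfl⟩
  have hT (i : ι) : #(T i) * ∏ j ∈ S, m j ≤ 2 * N + ∏ j ∈ S, m j := by
    refine card_mul_le_of_modEq (fun x hx ↦ abs_le.2 (Finset.mem_Icc.1 (mem_filter.1 hx).1))
      fun x hx y hy ↦ Int.modEq_iff_dvd.2 ?_
    rw [Nat.cast_prod]
    refine Finset.prod_dvd_of_coprime (fun i hi j hj hij ↦ (hS hi hj hij).isCoprime) fun j hj ↦ ?_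
    rw [← ZMod.intCast_eq_intCast_iff_dvd_sub, (mem_filter.1 hx).2 j hj, (mem_filter.1 hy).2 j hj]
  calc _ ≤ #(Fintype.piFinset T) * (∏ j ∈ S, m j) ^ Fintype.card ι := by gcongr
    _ = ∏ i, (#(T i) * ∏ j ∈ S, m j) := by
      rw [Fintype.card_piFinset, prod_mul_distrib, prod_const, card_univ]
    _ ≤ _ := Finset.prod_le_pow_card _ _ _ fun i _ ↦ hT i

theorem card_filter_residues_mem_mul_le (hS : (S : Set J).Pairwise (Function.onFun Nat.Coprime m))
    (N : ℕ) (B : ∀ j, Finset (ι → ZMod (m j))) :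
    #{w ∈ integerBox ι N | ∀ j ∈ S, (fun i ↦ (w i : ZMod (m j))) ∈ B j} *
        (∏ j ∈ S, m j) ^ Fintype.card ι ≤
      (2 * N + ∏ j ∈ S, m j) ^ Fintype.card ι * ∏ j ∈ S, #(B j) := by
  classical
  have hmaps (w : ι → ℤ)
      (hw : w ∈ {w ∈ integerBox ι N | ∀ j ∈ S, (fun i ↦ (w i : ZMod (m j))) ∈ B j}) :
      (fun j (_ : j ∈ S) i ↦ (w i : ZMod (m j))) ∈ S.pi B :=
    Finset.mem_pi.2 (mem_filter.1 hw).2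
  rw [card_eq_sum_card_fiberwise hmaps, sum_mul, ← card_pi, mul_comm, ← smul_eq_mul]
  refine sum_le_card_nsmul _ _ _ fun v _ ↦ le_trans ?_ (card_filter_residues_eq_mul_le hS N v)
  gcongr
  exact filter_subset _ _

theorem ncard_compl_le_of_card_le_mul {α : Type*} [Finite α] {C : ℕ} (hC : 0 < C) {G : Set α}
    (hG : Nat.card α ≤ C * G.ncard) : (Gᶜ.ncard : ℝ) ≤ (1 - (C : ℝ)⁻¹) * Nat.card α := by
  have hadd : (G.ncard : ℝ) + Gᶜ.ncard = Nat.card α := by exact_mod_cast G.ncard_add_ncard_compl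
  have hle : (C : ℝ)⁻¹ * Nat.card α ≤ G.ncard := by
    rw [inv_mul_le_iff₀ (by positivity)]
    exact_mod_cast hG
  linarith

variable [∀ j, NeZero (m j)] {C : ℕ} {Good : ∀ j, Set (ι → ZMod (m j))}

theorem ncard_forall_residues_notMem_le (hS : (S : Set J).Pairwise (Function.onFun Nat.Coprime m))
    (hC : 0 < C) (hGood : ∀ j ∈ S, m j ^ Fintype.card ι ≤ C * (Good j).ncard) {N : ℕ}
    (hN : ∏ j ∈ S, m j ≤ N) :
    ({w | w ∈ integerBox ι N ∧ ∀ j ∈ S, (fun i ↦ (w i : ZMod (m j))) ∉ Good j}.ncard : ℝ) ≤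
      2 ^ Fintype.card ι * (1 - (C : ℝ)⁻¹) ^ #S * #(integerBox ι N) := by
  classical
  set n := Fintype.card ι
  set M := ∏ j ∈ S, m j
  have hM : 0 < M := Finset.prod_pos fun j _ ↦ NeZero.pos (m j)
  have hbad : ∏ j ∈ S, (#(Good j)ᶜ.toFinset : ℝ) ≤ (1 - (C : ℝ)⁻¹) ^ #S * (M : ℝ) ^ n := by
    rw [Nat.cast_prod, ← prod_pow, ← prod_const, ← prod_mul_distrib]
    refine Finset.prod_le_prod (fun j _ ↦ Nat.cast_nonneg _) fun j hj ↦ ?_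
    have hcard : Nat.card (ι → ZMod (m j)) = m j ^ n := by simp [n]
    rw [← Set.ncard_eq_toFinset_card', ← Nat.cast_pow, ← hcard]
    exact ncard_compl_le_of_card_le_mul hC (hcard ▸ hGood j hj)
  have hbox : ((2 * N + M : ℕ) : ℝ) ^ n ≤ 2 ^ n * #(integerBox ι N) := by
    rw [card_integerBox, Nat.cast_pow, ← mul_pow]
    gcongr
    exact_mod_cast (by omega : 2 * N + M ≤ 2 * (2 * N + 1))
  have hsieve := card_filter_residues_mem_mul_le hS N fun j ↦ (Good j)ᶜ.toFinset
  simp only [Set.mem_toFinset, Set.mem_compl_iff] at hsieve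
  rw [← coe_filter, Set.ncard_coe_finset, ← mul_le_mul_iff_left₀ (by positivity : (0 : ℝ) < M ^ n)]
  calc _ ≤ ((2 * N + M : ℕ) : ℝ) ^ n * ∏ j ∈ S, (#(Good j)ᶜ.toFinset : ℝ) := by
        exact_mod_cast hsieve
    _ ≤ (2 ^ n * #(integerBox ι N)) * ((1 - (C : ℝ)⁻¹) ^ #S * (M : ℝ) ^ n) :=
        mul_le_mul hbox hbad (prod_nonneg fun _ _ ↦ Nat.cast_nonneg _)
          (mul_nonneg (by positivity) (Nat.cast_nonneg _))
    _ = _ := by ring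

theorem eventually_densityOne_exists_residues_mem [Infinite J]
    (hm : Pairwise (Function.onFun Nat.Coprime m)) (hC : 0 < C)
    (hGood : ∀ᶠ j in cofinite, m j ^ Fintype.card ι ≤ C * (Good j).ncard) :
    ∀ᶠ w in densityOne ι, ∃ j, (fun i ↦ (w i : ZMod (m j))) ∈ Good j := by
  refine eventually_densityOne_of_forall_exists_le fun ε hε ↦ ?_
  obtain ⟨r, hr⟩ := exists_pow_lt_of_lt_one (by positivity : 0 < ε / 2 ^ Fintype.card ι)
    (sub_lt_self (1 : ℝ) (by positivity : 0 < (C : ℝ)⁻¹))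
  obtain ⟨S, hSGood, rfl⟩ := (frequently_cofinite_iff_infinite.1
    hGood.frequently).exists_subset_card_eq r
  filter_upwards [eventually_ge_atTop (∏ j ∈ S, m j)] with N hN
  calc _ ≤ (2 ^ Fintype.card ι * (1 - (C : ℝ)⁻¹) ^ #S * #(integerBox ι N) : ℝ) := by
        refine le_trans ?_ (ncard_forall_residues_notMem_le (hm.set_pairwise _) hC hSGood hN)
        gcongr
        · exact (integerBox ι N).finite_toSet.subset fun _ ↦ And.left
        · exact fun hw j _ hj ↦ hw ⟨j, hj⟩
    _ ≤ _ := by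
      gcongr
      rw [mul_comm]
      exact ((lt_div_iff₀ (by positivity)).1 hr).le

end Sieve

section AlmostAllPolynomials

theorem intCast_zmod_ne_zero_of_natAbs_lt {a : ℤ} {p : ℕ} (ha : a ≠ 0) (hp : a.natAbs < p) :
    (a : ZMod p) ≠ 0 := by
  rw [Ne, ZMod.intCast_zmod_eq_zero_iff_dvd]
  exact fun h ↦ ha (Int.eq_zero_of_dvd_of_natAbs_lt_natAbs h (by simpa using hp))

theorem eventually_densityOne_exists_map_monicOfCoeffs {n : ℕ} {k : Fin (n + 1)} {a : ℤ}
    (ha : (k : ℕ) = 0 → a ≠ 0) {Q : ∀ (p : ℕ) [Fact p.Prime], (ZMod p)[X] → Prop} {B C : ℕ}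
    (hC : 0 < C)
    (hQ : ∀ (p : ℕ) [Fact p.Prime], ((k : ℕ) = 0 → (a : ZMod p) ≠ 0) → (2 : ZMod p) ≠ 0 →
      B ≤ Fintype.card (ZMod p) → Fintype.card (ZMod p) ^ n ≤
        C * {w : Fin n → ZMod p | Q p (monicOfCoeffs (k.insertNth (a : ZMod p) w))}.ncard) :
    ∀ᶠ w in densityOne (Fin n), ∃ p, ∃ _ : Fact p.Prime,
      Q p ((monicOfCoeffs (k.insertNth a w)).map (algebraMap ℤ (ZMod p))) := by
  have (p : Nat.Primes) : Fact (p : ℕ).Prime := ⟨p.2⟩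
  have hlarge : ∀ᶠ p : Nat.Primes in cofinite, max B (max 3 (a.natAbs + 1)) ≤ p := by
    refine Nat.Primes.coe_nat_injective.tendsto_cofinite.eventually ?_
    rw [Nat.cofinite_eq_atTop]
    exact eventually_ge_atTop _
  refine (eventually_densityOne_exists_residues_mem (m := fun p : Nat.Primes ↦ (p : ℕ))
    (Good := fun p ↦ {w | Q p (monicOfCoeffs (k.insertNth (a : ZMod p) w))})
    (fun p q hpq ↦ (Nat.coprime_primes p.2 q.2).2 (Nat.Primes.coe_nat_injective.ne hpq))
    hC (hlarge.mono fun p hp ↦ ?_)).mono ?_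
  · simp only [max_le_iff, Nat.add_one_le_iff] at hp
    have h2 : ((2 : ℤ) : ZMod p) ≠ 0 := intCast_zmod_ne_zero_of_natAbs_lt two_ne_zero hp.2.1
    have hbound := hQ p (fun hk ↦ intCast_zmod_ne_zero_of_natAbs_lt (ha hk) hp.2.2)
      (by exact_mod_cast h2) (by rw [ZMod.card]; exact hp.1)
    rw [ZMod.card] at hbound
    rwa [Fintype.card_fin]
  · rintro w ⟨p, hp⟩
    refine ⟨p, ⟨p.2⟩, ?_⟩
    have hmap : algebraMap ℤ (ZMod p) ∘ (k.insertNth a w : Fin (n + 1) → ℤ) =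
        k.insertNth (a : ZMod p) fun i ↦ (w i : ZMod p) :=
      Fin.eq_insertNth_iff.2 ⟨by simp, funext fun i ↦ by simp [Fin.removeNth]⟩
    rwa [map_monicOfCoeffs, hmap]

theorem eventually_densityOne_hasSymmetricReductions {n : ℕ} {k : Fin (n + 2)} {a : ℤ}
    (ha : (k : ℕ) = 0 → a ≠ 0) :
    ∀ᶠ w in densityOne (Fin (n + 1)),
      HasSymmetricReductions (monicOfCoeffs (k.insertNth a w)) (n + 1) := by
  have hC : 0 < 4 * (n + 2).factorial := by positivity
  have hk : (k : ℕ) ≤ n + 1 := Fin.is_le k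
  have hno := eventually_densityOne_exists_map_monicOfCoeffs ha (B := 16 * (n + 2).factorial) hC
    (Q := fun _ _ f ↦ ∀ x, ¬ f.IsRoot x) fun p _ ha' h2 hq ↦ by
      rw [ncard_insertNth_eq_card_filter k _ fun f : (ZMod p)[X] ↦ ∀ x, ¬ f.IsRoot x]
      convert card_pow_le_mul_card_filter_not_isRoot hk ha' h2 hq
  have hcycle := eventually_densityOne_exists_map_monicOfCoeffs ha (B := 16 * (n + 2).factorial) hC
    (Q := fun _ _ f ↦ f.Separable ∧ HasFactorType f (n + 1)) fun p _ _ h2 hq ↦ by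
      rw [ncard_insertNth_eq_card_filter k _
        fun f : (ZMod p)[X] ↦ f.Separable ∧ HasFactorType f (n + 1)]
      convert card_pow_le_mul_card_filter_separable_hasFactorType hk _ h2 hq n.succ_ne_zero le_rfl
  have hswap := eventually_densityOne_exists_map_monicOfCoeffs ha (B := 16 * (n + 2).factorial) hC
    (Q := fun _ _ f ↦ f.Separable ∧ HasFactorType f 2) fun p _ ha' h2 hq ↦ by
      rw [ncard_insertNth_eq_card_filter k _ fun f : (ZMod p)[X] ↦ f.Separable ∧ HasFactorType f 2]
      convert card_pow_le_mul_card_filter_separable_hasFactorType_two hk ha' h2 hq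
  filter_upwards [hno, hcycle, hswap] with w hno hcycle hswap
  exact ⟨hno, hcycle, hswap⟩

theorem forall_abs_coeff_monicOfCoeffs_insertNth_le {n : ℕ} {k : Fin (n + 1)} {a : ℤ} {N : ℕ}
    (ha : |a| ≤ N) {w : Fin n → ℤ} :
    (∀ i < n + 1, |(monicOfCoeffs (k.insertNth a w)).coeff i| ≤ N) ↔
      w ∈ integerBox (Fin n) N := by
  rw [← Fin.forall_iff (p := fun i : Fin (n + 1) ↦
    |(monicOfCoeffs (k.insertNth a w)).coeff i| ≤ N), Fin.forall_iff_succAbove k, mem_integerBox]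
  simp only [coeff_monicOfCoeffs, Fin.insertNth_apply_same, Fin.insertNth_apply_succAbove, ha,
    true_and]

theorem tendsto_ncard_div_ncard_of_eventually_densityOne {n : ℕ} {k : Fin (n + 1)} {a : ℤ}
    {P : ℤ[X] → Prop} (hP : ∀ᶠ w in densityOne (Fin n), P (monicOfCoeffs (k.insertNth a w))) :
    Tendsto (fun N : ℕ ↦
      ({f : ℤ[X] | f.Monic ∧ f.natDegree = n + 1 ∧ f.coeff k = a ∧
        (∀ i < n + 1, |f.coeff i| ≤ N) ∧ P f}.ncard : ℝ) /
      ({f : ℤ[X] | f.Monic ∧ f.natDegree = n + 1 ∧ f.coeff k = a ∧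
        ∀ i < n + 1, |f.coeff i| ≤ N}.ncard : ℝ)) atTop (𝓝 1) := by
  refine (tendsto_ncard_div_of_eventually_densityOne hP).congr' ?_
  filter_upwards [eventually_ge_atTop a.natAbs] with N hN
  have ha : |a| ≤ N := by rw [Int.abs_eq_natAbs]; exact_mod_cast hN
  have hmonic (f : ℤ[X]) (R : Prop) :
      f.Monic ∧ f.natDegree = n + 1 ∧ R ↔ IsMonicOfDegree f (n + 1) ∧ R :=
    ⟨fun ⟨hf, hd, hR⟩ ↦ ⟨⟨hd, hf⟩, hR⟩, fun ⟨⟨hd, hf⟩, hR⟩ ↦ ⟨hf, hd, hR⟩⟩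
  simp only [hmonic]
  rw [← ncard_setOf_monicOfCoeffs_insertNth, ← ncard_setOf_monicOfCoeffs_insertNth]
  simp only [forall_abs_coeff_monicOfCoeffs_insertNth_le ha, Set.ncard_coe_finset, setOfPred_mem]

end AlmostAllPolynomials

/-- among monic integer polynomials of degree `d` with the
coefficient of `X^k` fixed to `a` and all other coefficients bounded by `N`,
the proportion with full symmetric Galois group over `ℚ` tends to `1` as
`N → ∞`. -/
theorem stmt16 (d k : ℕ) (hd : 2 ≤ d) (hk : k < d) (a : ℤ)
    (ha : k = 0 → a ≠ 0) :
    Filter.Tendsto (fun N : ℕ =>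
        (Set.ncard {f : Polynomial ℤ |
            f.Monic ∧ f.natDegree = d ∧ f.coeff k = a ∧
            (∀ i < d, |f.coeff i| ≤ (N : ℤ)) ∧
            (let q : Polynomial ℚ := f.map (algebraMap ℤ ℚ)
             Set.ncard (q.rootSet q.SplittingField) = d ∧
               Function.Bijective
                 (@Polynomial.Gal.galActionHom ℚ _ q q.SplittingField _ _
                   ⟨Polynomial.SplittingField.splits q⟩))} : ℝ) /
        (Set.ncard {f : Polynomial ℤ |
            f.Monic ∧ f.natDegree = d ∧ f.coeff k = a ∧
            ∀ i < d, |f.coeff i| ≤ (N : ℤ)} : ℝ))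
      Filter.atTop (nhds 1) := by
  obtain ⟨n, rfl⟩ := Nat.exists_eq_add_of_le' hd
  lift k to Fin (n + 2) using hk
  refine tendsto_ncard_div_ncard_of_eventually_densityOne
    ((eventually_densityOne_hasSymmetricReductions ha).mono fun w hw ↦ ?_)
  intro q
  have : IsSplittingField ℚ q.SplittingField q := by
    -- Two `ℚ`-algebra structures on the splitting field are in play, equal but not by unfolding.
    convert IsSplittingField.splittingField q
    exact Subsingleton.elim _ _
  have := IsSplittingField.finiteDimensional q.SplittingField q
  have := Normal.of_isSplittingField (E := q.SplittingField) q
  have : Fact (q.map (algebraMap ℚ q.SplittingField)).Splits := ⟨SplittingField.splits q⟩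
  have hf := isMonicOfDegree_monicOfCoeffs (k.insertNth a w)
  exact hw.ncard_rootSet_and_bijective_galActionHom hf.monic hf.natDegree_eq
end
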